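/- Let n ≥ 3 be odd and f_0 a nonzero odd integer with squarefree part k. Let F ∈ F_n^{r_1,r_2}(f_0,ℤ) be primitive and suppose that R_F ⊗_ℤ ℤ_p is the maximal order (the integral closure of ℤ_p) in K_F ⊗_ℚ ℚ_p for every prime p dividing f_0, and that F is squareful over ℤ_p for every prime p dividing k. Then the class of the fractional ideal I_F^{n-2} — which equals the class of the inverse different of R_F — is a square in the ideal class group Cl(R_F). -/

import Mathlib

open Polynomial Matrix MeasureTheory
open scoped Classical
noncomputable section
namespace BHS



/-! ### Binary forms and the rings they cut out, over a general base -/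

variable (R K : Type) [CommRing R] [Field K] [Algebra R K]

/-- The one-variable polynomial `F(x,1)` of the binary form of degree `n` with
coefficient vector `c` (so `F(x,z) = ∑ c i · x^(n-i) · z^i`), over `K`. -/
def binPoly (n : ℕ) (c : ℕ → R) : Polynomial K :=
  ∑ i ∈ Finset.range (n + 1), Polynomial.C (algebraMap R K (c i)) * Polynomial.X ^ (n - i)

/-- The étale algebra `K_F = K[x]/(F(x,1))`. -/
abbrev KF (n : ℕ) (c : ℕ → R) : Type := AdjoinRoot (binPoly R K n c)

/-- θ, the image of x in K_F. -/
def θF (n : ℕ) (c : ℕ → R) : KF R K n c := AdjoinRoot.root _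

/-- `ζ_i = ∑_{j<i} f_j θ^{i-j}`. -/
def ζF (n : ℕ) (c : ℕ → R) (i : ℕ) : KF R K n c :=
  ∑ j ∈ Finset.range i, algebraMap R (KF R K n c) (c j) * θF R K n c ^ (i - j)

/-- The ring `R_F`, as the free `R`-submodule of `K_F` with basis `1, ζ_1, …, ζ_{n-1}`
(a subring by Nakagawa's theorem). -/
def RFmod (n : ℕ) (c : ℕ → R) : Submodule R (KF R K n c) :=
  Submodule.span R ({1} ∪ {x | ∃ i, 1 ≤ i ∧ i ≤ n - 1 ∧ x = ζF R K n c i})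

/-- The fractional ideal `I_F^k`, as the free `R`-submodule of `K_F` with basis
`1, θ, …, θ^k, ζ_{k+1}, …, ζ_{n-1}`. -/
def IFmod (n : ℕ) (c : ℕ → R) (k : ℕ) : Submodule R (KF R K n c) :=
  Submodule.span R ({x | ∃ j ≤ k, x = θF R K n c ^ j} ∪
    {x | ∃ i, k + 1 ≤ i ∧ i ≤ n - 1 ∧ x = ζF R K n c i})

/-- `R_F` is the maximal order (the integral closure of `R`) in `K_F`. -/
def IsMaxOrder (n : ℕ) (c : ℕ → R) : Prop :=
  RFmod R K n c = Subalgebra.toSubmodule (integralClosure R (KF R K n c))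

/-- `M` is stable under multiplication by `R_F`, i.e. `M` is an `R_F`-submodule of `K_F`. -/
def IsStable (n : ℕ) (c : ℕ → R) (M : Submodule R (KF R K n c)) : Prop :=
  ∀ ρ ∈ RFmod R K n c, ∀ x ∈ M, ρ * x ∈ M

/-- `M` is an invertible fractional ideal of `R_F`. -/
def IsInvIdeal (n : ℕ) (c : ℕ → R) (M : Submodule R (KF R K n c)) : Prop :=
  IsStable R K n c M ∧
    ∃ N : Submodule R (KF R K n c), IsStable R K n c N ∧ M * N = RFmod R K n c

/-- The principal fractional ideal of `R_F` generated by `α`. -/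
def principal (n : ℕ) (c : ℕ → R) (α : KF R K n c) : Submodule R (KF R K n c) :=
  Submodule.span R {α} * RFmod R K n c

/-- `ρ` is a unit of the order `R_F`. -/
def IsUnitRF (n : ℕ) (c : ℕ → R) (ρ : KF R K n c) : Prop :=
  ρ ∈ RFmod R K n c ∧ ∃ σ ∈ RFmod R K n c, ρ * σ = 1

/-- `#R_F^×[2]`, the number of 2-torsion units of `R_F`. -/
def twoTorsUnitsCount (n : ℕ) (c : ℕ → R) : ℕ :=
  Nat.card {ρ : KF R K n c // ρ ∈ RFmod R K n c ∧ ρ ^ 2 = 1}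

/-- The number of 2-torsion elements of the ideal class group `Cl(R_F)`: the number of
invertible fractional ideals of `R_F` whose square is principal, counted modulo
principal fractional ideals. -/
def clTwoCount (n : ℕ) (c : ℕ → R) : ℕ :=
  Nat.card (Quot (fun (I J : {M : Submodule R (KF R K n c) //
      IsInvIdeal R K n c M ∧
        ∃ α : KF R K n c, IsUnit α ∧ M * M = principal R K n c α}) =>
    ∃ α : KF R K n c, IsUnit α ∧
      (I : Submodule R (KF R K n c)) =
        Submodule.span R {α} * (J : Submodule R (KF R K n c))))

/-- `α ∈ K_F` is totally positive: positive under every real embedding. -/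
def TotPos (n : ℕ) (c : ℕ → R) (α : KF R K n c) : Prop :=
  ∀ φ : KF R K n c →+* ℝ, 0 < φ α

/-- The number of 2-torsion elements of the narrow class group `Cl⁺(R_F)`. -/
def clTwoCountPlus (n : ℕ) (c : ℕ → R) : ℕ :=
  Nat.card (Quot (fun (I J : {M : Submodule R (KF R K n c) //
      IsInvIdeal R K n c M ∧
        ∃ α : KF R K n c, IsUnit α ∧ TotPos R K n c α ∧ M * M = principal R K n c α}) =>
    ∃ α : KF R K n c, IsUnit α ∧ TotPos R K n c α ∧
      (I : Submodule R (KF R K n c)) =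
        Submodule.span R {α} * (J : Submodule R (KF R K n c))))

/-- The order of the ideal class group of `R_F`. -/
def clCount (n : ℕ) (c : ℕ → R) : ℕ :=
  Nat.card (Quot (fun (I J : {M : Submodule R (KF R K n c) // IsInvIdeal R K n c M}) =>
    ∃ α : KF R K n c, IsUnit α ∧
      (I : Submodule R (KF R K n c)) =
        Submodule.span R {α} * (J : Submodule R (KF R K n c))))

/-- The order of the narrow class group of `R_F`. -/
def clCountPlus (n : ℕ) (c : ℕ → R) : ℕ :=
  Nat.card (Quot (fun (I J : {M : Submodule R (KF R K n c) // IsInvIdeal R K n c M}) =>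
    ∃ α : KF R K n c, IsUnit α ∧ TotPos R K n c α ∧
      (I : Submodule R (KF R K n c)) =
        Submodule.span R {α} * (J : Submodule R (KF R K n c))))


/-! ### The group G_n and pairs of symmetric matrices -/

/-- `G_n(S)`: `SL_n(S)` when `n` is odd, `SL_n^±(S)` when `n` is even. -/
def GnSet (S : Type) [CommRing S] (n : ℕ) : Set (Matrix (Fin n) (Fin n) S) :=
  {g | if Odd n then g.det = 1 else g.det = 1 ∨ g.det = -1}

/-- `(A', B')` is in the `G_n(S)`-orbit of `(A, B)` under `g·(A,B) = (gAgᵀ, gBgᵀ)`. -/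
def SameOrbit (S : Type) [CommRing S] (n : ℕ)
    (A B A' B' : Matrix (Fin n) (Fin n) S) : Prop :=
  ∃ g ∈ GnSet S n, A' = g * A * gᵀ ∧ B' = g * B * gᵀ

/-- The binary form `inv(x·A + z·B) = (-1)^⌊n/2⌋ det(x·A + z·B)`, as a polynomial
in the two variables `x = X 0`, `z = X 1`. -/
def invForm (S : Type) [CommRing S] (n : ℕ) (A B : Matrix (Fin n) (Fin n) S) :
    MvPolynomial (Fin 2) S :=
  (-1) ^ (n / 2) *
    Matrix.det (Matrix.of fun i j =>
      MvPolynomial.X 0 * MvPolynomial.C (A i j) + MvPolynomial.X 1 * MvPolynomial.C (B i j))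

/-- Coefficients of the monicized form `F_mon(x,z) = F(x, f_0·z)/f_0`. -/
def monC (S : Type) [CommRing S] (c : ℕ → S) (i : ℕ) : S :=
  if i = 0 then 1 else c i * c 0 ^ (i - 1)

/-- The binary form of degree `n` with coefficient vector `c`, as a polynomial in the
two variables `x = X 0`, `z = X 1`. -/
def mvForm (S : Type) [CommRing S] (n : ℕ) (c : ℕ → S) : MvPolynomial (Fin 2) S :=
  ∑ i ∈ Finset.range (n + 1),
    MvPolynomial.C (c i) * MvPolynomial.X 0 ^ (n - i) * MvPolynomial.X 1 ^ i

/-- The identity `inv(x·A + z·B) = r · F_mon(x,z)` of binary forms of degree `n`. -/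
def InvEq (S : Type) [CommRing S] (n : ℕ) (c : ℕ → S) (r : S)
    (A B : Matrix (Fin n) (Fin n) S) : Prop :=
  invForm S n A B = MvPolynomial.C r * mvForm S n (monC S c)




/-! ### p-adic machinery -/

variable (p : ℕ) [Fact p.Prime]

instance : MeasurableSpace ℤ_[p] := borel _
instance : BorelSpace ℤ_[p] := ⟨rfl⟩

/-- Haar probability measure on `ℤ_p^n`. -/
def haarP (n : ℕ) : Measure (Fin n → ℤ_[p]) :=
  Measure.addHaarMeasure ⟨⟨Set.univ, isCompact_univ⟩, by rw [interior_univ]; exact Set.univ_nonempty⟩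

/-- The `p`-adic density of `A` within `B` (subsets of the coefficient space `ℤ_p^n`). -/
def densIn (n : ℕ) (A B : Set (Fin n → ℤ_[p])) : ℝ :=
  (haarP p n A).toReal / (haarP p n B).toReal

/-- The coefficient vector of the degree-`n` binary form with leading coefficient `f0` and
remaining coefficients `v`. -/
def consF0 (n : ℕ) (f0 : ℤ_[p]) (v : Fin n → ℤ_[p]) : ℕ → ℤ_[p] :=
  fun j => if j = 0 then f0 else if h : j - 1 < n then v ⟨j - 1, h⟩ else 0

/-- The reduction of the binary form with coefficients `c` modulo `p`, as a polynomial in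
two variables `x = X 0`, `z = X 1` over `F_p`. -/
def redForm (n : ℕ) (c : ℕ → ℤ_[p]) : MvPolynomial (Fin 2) (ZMod p) :=
  ∑ i ∈ Finset.range (n + 1),
    MvPolynomial.C (PadicInt.toZMod (c i)) * MvPolynomial.X 0 ^ (n - i) * MvPolynomial.X 1 ^ i

/-- `F` is squareful over `ℤ_p`: `F ≡ κ·z^{e}·H² (mod p)` with `e > 0`, `κ ∈ F_p^×` and
`H` a monic binary form over `F_p` (hence not divisible by `z`). -/
def SquarefulP (n : ℕ) (c : ℕ → ℤ_[p]) : Prop :=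
  ∃ (κ : (ZMod p)ˣ) (e d : ℕ) (H : MvPolynomial (Fin 2) (ZMod p)),
    0 < e ∧ H.IsHomogeneous d ∧ MvPolynomial.coeff (Finsupp.single 0 d) H = 1 ∧
    redForm p n c = MvPolynomial.C (κ : ZMod p) * MvPolynomial.X 1 ^ e * H ^ 2

/-- `F` is evenly ramified over `ℤ_p`: `F ≡ κ·H² (mod p)` with `κ ∈ F_p^×`. -/
def EvenRamP (n : ℕ) (c : ℕ → ℤ_[p]) : Prop :=
  ∃ (κ : (ZMod p)ˣ) (H : MvPolynomial (Fin 2) (ZMod p)),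
    redForm p n c = MvPolynomial.C (κ : ZMod p) * H ^ 2

/-- `F` is primitive over `ℤ_p`: its coefficients generate the unit ideal. -/
def PrimP (n : ℕ) (c : ℕ → ℤ_[p]) : Prop := ∃ i ≤ n, IsUnit (c i)

/-- `F` is separable (of degree `n`) over `ℚ_p`. -/
def SepDegP (n : ℕ) (c : ℕ → ℤ_[p]) : Prop :=
  (binPoly ℤ_[p] ℚ_[p] n c).Separable ∧ (binPoly ℤ_[p] ℚ_[p] n c).natDegree = n

/-- The determinant of the Sylvester matrix of `F(x,1)` (of formal degree n) and
`F'(x,1)` (of formal degree n-1); it equals `±f_0` times the discriminant of the form. -/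
def sylvDet (S : Type) [CommRing S] (n : ℕ) (c : ℕ → S) : S :=
  Matrix.det (Matrix.of (fun (i j : Fin (n + (n - 1))) =>
    if (i : ℕ) < n - 1 then
      (if (i : ℕ) ≤ (j : ℕ) ∧ (j : ℕ) ≤ (i : ℕ) + n then c ((j : ℕ) - (i : ℕ)) else 0)
    else
      (if (i : ℕ) - (n - 1) ≤ (j : ℕ) ∧ (j : ℕ) ≤ ((i : ℕ) - (n - 1)) + (n - 1) then
        ((n - ((j : ℕ) - ((i : ℕ) - (n - 1))) : ℕ) : S) * c ((j : ℕ) - ((i : ℕ) - (n - 1)))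
      else 0)))

/-- The discriminant of the form with coefficients `c` is not divisible by `p²`. -/
def DiscOK (n : ℕ) (c : ℕ → ℤ_[p]) : Prop :=
  ¬ ((p : ℤ_[p]) ^ 2 * c 0 ∣ sylvDet ℤ_[p] n c)

/-- The reduction modulo `p` of the degree-`n` binary form with coefficients `c` is a
separable binary form over `F_p`. -/
def SepFormModP (n : ℕ) (c : ℕ → ℤ_[p]) : Prop :=
  (∑ i ∈ Finset.range (n + 1),
      Polynomial.C (PadicInt.toZMod (c i)) * (Polynomial.X : Polynomial (ZMod p)) ^ (n - i)).Separable ∧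
  n - 1 ≤ (∑ i ∈ Finset.range (n + 1),
      Polynomial.C (PadicInt.toZMod (c i)) * (Polynomial.X : Polynomial (ZMod p)) ^ (n - i)).natDegree



/-! ### Integral binary forms, heights, and averages -/

/-- Extend a coefficient vector `Fin (n+1) → ℤ` to `ℕ → ℤ` by zero. -/
def fpad (n : ℕ) (f : Fin (n + 1) → ℤ) : ℕ → ℤ :=
  fun j => if h : j < n + 1 then f ⟨j, h⟩ else 0

/-- Cast an integral coefficient vector to `ℤ_p`. -/
def castP (p : ℕ) [Fact p.Prime] (c : ℕ → ℤ) : ℕ → ℤ_[p] := fun j => (c j : ℤ_[p])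

/-- `F` has nonzero discriminant (is separable of degree `n` over `ℝ`) and splits over `ℝ`
into `r1` linear and `(n - r1)/2` irreducible quadratic factors. -/
def SepSig (n r1 : ℕ) (f : Fin (n + 1) → ℤ) : Prop :=
  (binPoly ℤ ℝ n (fpad n f)).Separable ∧ (binPoly ℤ ℝ n (fpad n f)).natDegree = n ∧
    (binPoly ℤ ℝ n (fpad n f)).roots.card = r1

/-- `F` is primitive: its coefficients generate the unit ideal of `ℤ`. -/
def PrimZ (n : ℕ) (f : Fin (n + 1) → ℤ) : Prop := IsUnit (Finset.univ.gcd f)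

/-- The family `F_n^{r1,r2}(f0, ℤ)`. -/
def FnSig (n : ℕ) (f0 : ℤ) (r1 : ℕ) : Set (Fin (n + 1) → ℤ) :=
  {f | f 0 = f0 ∧ SepSig n r1 f}

/-- The family `F_{n,max}^{r1,r2}(f0, ℤ)`. -/
def FnMax (n : ℕ) (f0 : ℤ) (r1 : ℕ) : Set (Fin (n + 1) → ℤ) :=
  {f | f ∈ FnSig n f0 r1 ∧ PrimZ n f ∧ IsMaxOrder ℤ ℚ n (fpad n f)}

/-- Coefficients `f̃_i` of the unique real unipotent translate of the monicized form having
vanishing `x^{n-1}z`-coefficient. -/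
def tildeC (n : ℕ) (f : Fin (n + 1) → ℤ) (i : ℕ) : ℝ :=
  ∑ j ∈ Finset.range (i + 1),
    (monC ℤ (fpad n f) j : ℝ) * ((n - j).choose (i - j) : ℝ) *
      (-(monC ℤ (fpad n f) 1 : ℝ) / n) ^ (i - j)

/-- The height `H(F) = max_{2 ≤ i ≤ n} |f̃_i|^{1/i}`. -/
def heightZ (n : ℕ) (f : Fin (n + 1) → ℤ) : ℝ :=
  ⨆ i : (Finset.Icc 2 n : Finset ℕ), |tildeC n f i| ^ (((i : ℕ) : ℝ))⁻¹

/-- Canonical representatives for the `M_1(ℤ)`-classes in the family `𝓕` of height `< X`: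
each class contains a unique form whose `x^{n-1}z`-coefficient lies in `[0, n·|f0|)`. -/
def repSet (n : ℕ) (f0 : ℤ) (𝓕 : Set (Fin (n + 1) → ℤ)) (X : ℝ) : Set (Fin (n + 1) → ℤ) :=
  {f | f ∈ 𝓕 ∧ heightZ n f < X ∧ 0 ≤ f 1 ∧ f 1 < n * |f0|}

/-- The ratio `(∑_{F} φ(F)) / (∑_{F} 1)` over `M_1(ℤ)`-classes of forms in `𝓕` of
height `< X`. -/
def avgRatio (n : ℕ) (f0 : ℤ) (𝓕 : Set (Fin (n + 1) → ℤ)) (φ : (Fin (n + 1) → ℤ) → ℕ)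
    (X : ℝ) : ℝ :=
  ((∑' g : repSet n f0 𝓕 X, (φ g : ENNReal)) / (∑' _g : repSet n f0 𝓕 X, (1 : ENNReal))).toReal

/-- `Avg_{F ∈ 𝓕} φ(F) ≤ a`. -/
def AvgLE (n : ℕ) (f0 : ℤ) (𝓕 : Set (Fin (n + 1) → ℤ)) (φ : (Fin (n + 1) → ℤ) → ℕ)
    (a : ℝ) : Prop :=
  Filter.limsup (avgRatio n f0 𝓕 φ) Filter.atTop ≤ a

/-- `Avg_{F ∈ 𝓕} φ(F) = a` (the limit exists and equals `a`). -/
def AvgEq (n : ℕ) (f0 : ℤ) (𝓕 : Set (Fin (n + 1) → ℤ)) (φ : (Fin (n + 1) → ℤ) → ℕ)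
    (a : ℝ) : Prop :=
  Filter.Tendsto (avgRatio n f0 𝓕 φ) Filter.atTop (nhds a)

/-! ### Families of local specifications -/

instance instPrimesFact (q : Nat.Primes) : Fact (q : ℕ).Prime := ⟨q.2⟩

/-- The `M_1`-action on coefficient vectors: the coefficients of `F((x,z)·γ) = F(x + sz, z)`. -/
def m1actC (S : Type) [CommRing S] (n : ℕ) (s : S) (c : ℕ → S) : ℕ → S :=
  fun i => ∑ j ∈ Finset.range (i + 1), c j * ((n - j).choose (i - j) : S) * s ^ (i - j)

/-- A family of local specifications `Σ = (Σ_p)_p` (with `Σ_∞` given by a signature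
condition, recorded separately): for each prime `p`, a nonempty `M_1(ℤ_p)`-invariant open
subset of the separable primitive forms of degree `n` with leading coefficient `f0`
(identified with their non-leading coefficient vectors in `ℤ_p^n`), whose boundary has
measure `0`. -/
structure LocalSpecs (n : ℕ) (f0 : ℤ) : Type where
  sig : ∀ q : Nat.Primes, Set (Fin n → ℤ_[(q : ℕ)])
  nonempty' : ∀ q : Nat.Primes, (sig q).Nonempty
  isOpen' : ∀ q : Nat.Primes, IsOpen (sig q)
  m1inv : ∀ q : Nat.Primes, ∀ s : ℤ_[(q : ℕ)], ∀ v ∈ sig q,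
    (fun i : Fin n =>
      m1actC ℤ_[(q : ℕ)] n s (consF0 (q : ℕ) n ((f0 : ℤ) : ℤ_[(q : ℕ)]) v) ((i : ℕ) + 1)) ∈ sig q
  boundary : ∀ q : Nat.Primes, haarP (q : ℕ) n (frontier (sig q)) = 0
  sep : ∀ q : Nat.Primes, ∀ v ∈ sig q, SepDegP (q : ℕ) n (consF0 (q : ℕ) n ((f0 : ℤ) : ℤ_[(q : ℕ)]) v)
  prim : ∀ q : Nat.Primes, ∀ v ∈ sig q, PrimP (q : ℕ) n (consF0 (q : ℕ) n ((f0 : ℤ) : ℤ_[(q : ℕ)]) v)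

/-- `F` satisfies all the local specifications at finite places. -/
def memSig (n : ℕ) (f0 : ℤ) (L : LocalSpecs n f0) (f : Fin (n + 1) → ℤ) : Prop :=
  ∀ q : Nat.Primes, (fun i : Fin n => ((f i.succ : ℤ) : ℤ_[(q : ℕ)])) ∈ L.sig q

/-- The family `F_n(f0, Σ)` cut out by the local specifications `Σ` (with
`Σ_∞ = F_n^{r1,r2}(f0,ℝ)`). -/
def FnSigma (n : ℕ) (f0 : ℤ) (r1 : ℕ) (L : LocalSpecs n f0) : Set (Fin (n + 1) → ℤ) :=
  {f | f ∈ FnSig n f0 r1 ∧ memSig n f0 L f}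

/-- `Σ` is acceptable: for all sufficiently large primes `p`, `Σ_p` contains all separable
primitive forms whose discriminant is not divisible by `p²`. -/
def Acceptable (n : ℕ) (f0 : ℤ) (L : LocalSpecs n f0) : Prop :=
  ∃ N : ℕ, ∀ q : Nat.Primes, N < (q : ℕ) → ∀ v : Fin n → ℤ_[(q : ℕ)],
    SepDegP (q : ℕ) n (consF0 (q : ℕ) n ((f0 : ℤ) : ℤ_[(q : ℕ)]) v) →
    PrimP (q : ℕ) n (consF0 (q : ℕ) n ((f0 : ℤ) : ℤ_[(q : ℕ)]) v) →
    DiscOK (q : ℕ) n (consF0 (q : ℕ) n ((f0 : ℤ) : ℤ_[(q : ℕ)]) v) →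
    v ∈ L.sig q

/-- The squareful density `r_p(Σ)` (for odd `n`). -/
def rpOdd (n : ℕ) (f0 : ℤ) (L : LocalSpecs n f0) (q : Nat.Primes) : ℝ :=
  densIn (q : ℕ) n
    {v ∈ L.sig q | SquarefulP (q : ℕ) n (consF0 (q : ℕ) n ((f0 : ℤ) : ℤ_[(q : ℕ)]) v)}
    (L.sig q)

/-- The evenly-ramified density `r_p(Σ)` (for even `n`). -/
def rpEven (n : ℕ) (f0 : ℤ) (L : LocalSpecs n f0) (q : Nat.Primes) : ℝ :=
  densIn (q : ℕ) n
    {v ∈ L.sig q | EvenRamP (q : ℕ) n (consF0 (q : ℕ) n ((f0 : ℤ) : ℤ_[(q : ℕ)]) v)}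
    (L.sig q)

def two' : Nat.Primes := ⟨2, Nat.prime_two⟩

/-- A nice family of local specifications, for odd `n`: acceptable, with
`Σ_2 ⊆ F_{n,max}(f0, ℤ_2)`. -/
def NiceOdd (n : ℕ) (f0 : ℤ) (L : LocalSpecs n f0) : Prop :=
  Acceptable n f0 L ∧
    ∀ v ∈ L.sig two', IsMaxOrder ℤ_[2] ℚ_[2] n (consF0 2 n ((f0 : ℤ) : ℤ_[2]) v)

/-- The form over `F_2` with leading coefficient `1` and remaining coefficients `w`
is separable. -/
def SepF2 (n : ℕ) (w : Fin n → ZMod 2) : Prop :=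
  (∑ i ∈ Finset.range (n + 1),
      Polynomial.C (if h : i = 0 then 1 else if h2 : i - 1 < n then w ⟨i - 1, h2⟩ else 0) *
        (Polynomial.X : Polynomial (ZMod 2)) ^ (n - i)).Separable

/-- A nice family of local specifications, for even `n`: acceptable, `Σ_2` is the full
preimage inside `F_{n,max}(f0, ℤ_2)` under reduction modulo 2 of a set of separable forms
over `F_2`, and `r_p(Σ) = 0` for all sufficiently large `p`. -/
def NiceEven (n : ℕ) (f0 : ℤ) (L : LocalSpecs n f0) : Prop :=
  Acceptable n f0 L ∧
  (∃ T : Set (Fin n → ZMod 2), (∀ w ∈ T, SepF2 n w) ∧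
    L.sig two' = {v | SepDegP 2 n (consF0 2 n ((f0 : ℤ) : ℤ_[2]) v) ∧
      PrimP 2 n (consF0 2 n ((f0 : ℤ) : ℤ_[2]) v) ∧
      IsMaxOrder ℤ_[2] ℚ_[2] n (consF0 2 n ((f0 : ℤ) : ℤ_[2]) v) ∧
      (fun i : Fin n => PadicInt.toZMod (v i)) ∈ T}) ∧
  (∃ N : ℕ, ∀ q : Nat.Primes, N < (q : ℕ) → rpEven n f0 L q = 0)

/-!
The ideal `I_F = (1, θ)` has inverse `𝔞`, the ideal of denominators of `θ`, and `n - 2` is odd, so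
it suffices that the class of `𝔞` is a square.

Let `p ∣ k`. As `F` is a constant times a square modulo `p`, there are `G` of degree at most
`(n - 1) / 2` and `E` of degree at most `n` with `G(θ)² = -p E(θ)`. By Dedekind's criterion,
maximality at `p` forces `G` and `E` to be coprime modulo `p`. Homogenizing with powers of `𝔞`,
the ideal `Q_p = (p) + G(θ) 𝔞 ^ ((n - 1) / 2)` then satisfies `Q_p² ((p) + 𝔞) = (p)`.

Write `f_0 = k m²`. If `p ∣ m`, maximality at `p` gives `p ∤ f_1`, and the ideals `(r) + 𝔞` with
`r ∣ f_0` are multiplicative enough that `𝔞 = ((k) + 𝔞) ((m) + 𝔞)²` and that the `Q_p` multiply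
to an ideal `Q` with `Q² ((k) + 𝔞) = (k)`. With `n - 2 = 2 r + 1`, the ideal
`J = I_F ^ (r + 1) Q ((k) + 𝔞) ((m) + 𝔞)` satisfies `J² = (k) I_F ^ (n - 2)`.
-/

section IdempotentSemiring

variable {α : Type*} [IdemCommSemiring α]

theorem add_pow_le_add_pow {a b : α} (ha : a ≤ 1) (hb : b ≤ 1) (m : ℕ) :
    (a + b) ^ m ≤ a + b ^ m := by
  induction m with
  | zero => simp [add_eq_sup]
  | succ m ih =>
    have hab : a + b ≤ 1 := add_le ha hb
    calc (a + b) ^ (m + 1) = (a + b) ^ m * (a + b) := pow_succ _ _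
      _ ≤ (a + b ^ m) * (a + b) := mul_le_mul' ih le_rfl
      _ = a * (a + b) + b ^ m * a + b ^ (m + 1) := by ring
      _ ≤ a + b ^ (m + 1) := by
        gcongr
        exact add_le (mul_le_of_le_one_right' hab) (mul_le_of_le_one_left' (pow_le_one' hb m))

theorem add_mul_add_eq_mul_add {a b b' c : α} (ha : a ≤ 1) (hone : b + b' + c = 1)
    (hca : c * a ≤ a * a + b * b') : (b + a) * (b' + a) = b * b' + a := by
  have hbb' : b + b' ≤ 1 := (add_le_iff.1 hone.le).1
  obtain ⟨hb, hb'⟩ := add_le_iff.1 hbb'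
  apply le_antisymm
  · calc (b + a) * (b' + a) = b * b' + (b * a + a * (b' + a)) := by ring
      _ ≤ b * b' + a := by
        gcongr
        exact add_le (mul_le_of_le_one_left' hb) (mul_le_of_le_one_right' (add_le hb' ha))
  · have ha_le : a ≤ (b + a) * (b' + a) := by
      calc a = (b + b' + c) * a := by rw [hone, one_mul]
        _ = b * a + b' * a + c * a := by ring
        _ ≤ b * a + b' * a + (a * a + b * b') := by gcongr
        _ = (b + a) * (b' + a) := by ring
    have hbb'_le : b * b' ≤ (b + a) * (b' + a) := by
      gcongr <;> simp only [add_eq_sup, le_sup_left]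
    exact add_le hbb'_le ha_le

theorem eq_one_of_add_eq_one_of_pow_le {b t : α} (hbt : b + t = 1) {N : ℕ} (htN : t ^ N ≤ b) :
    b = 1 := by
  obtain ⟨hb, ht⟩ := add_le_iff.1 hbt.le
  refine le_antisymm hb ?_
  calc (1 : α) = (b + t) ^ N := by rw [hbt, one_pow]
    _ ≤ b + t ^ N := add_pow_le_add_pow hb ht N
    _ ≤ b := add_le le_rfl htN

/- The left-hand side is `p * b`, where `b` contains a power of `p + a`; by `hone` it is comaximal
with `p + a`, so `b = 1`. -/
theorem mul_self_mul_add_eq {a p e g : α} {s N : ℕ} (ha : a ≤ 1) (hp : p ≤ 1)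
    (hg : g * g = p * e) (hga : g * a ^ s ≤ 1) (hea : e * a ^ (2 * s + 1) ≤ 1)
    (hN : a ^ N ≤ p + g * a ^ s + e * a ^ (2 * s + 1))
    (hone : 1 ≤ e * a ^ (2 * s) * (p + a) + (p + a)) :
    (p + g * a ^ s) * (p + g * a ^ s) * (p + a) = p := by
  set t := p + a with ht
  set b := (p + g * a ^ s + e * a ^ (2 * s)) * t with hb
  have ht1 : t ≤ 1 := add_le hp ha
  have hp_ea : p * (e * a ^ (2 * s)) ≤ 1 := by
    calc p * (e * a ^ (2 * s)) = (g * a ^ s) * (g * a ^ s) := by rw [← mul_assoc, ← hg]; ring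
      _ ≤ 1 := mul_le_one' hga hga
  have hb1 : b ≤ 1 := by
    calc b = (p + g * a ^ s) * t + (p * (e * a ^ (2 * s)) + e * a ^ (2 * s + 1)) := by
          rw [hb, ht]; ring
      _ ≤ 1 := add_le (mul_le_one' (add_le hp hga) ht1) (add_le hp_ea hea)
  have hbt : b + t = 1 := by
    refine le_antisymm (add_le hb1 ht1) (hone.trans ?_)
    gcongr
    rw [hb]
    gcongr
    simp only [add_eq_sup, le_sup_right]
  have htN : t ^ (N + 1) ≤ b := by
    calc t ^ (N + 1) = t ^ N * t := pow_succ _ _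
      _ ≤ (p + a ^ N) * t := by gcongr; exact add_pow_le_add_pow hp ha N
      _ ≤ (p + (p + g * a ^ s + e * a ^ (2 * s + 1))) * t := by gcongr
      _ = (p + g * a ^ s) * t + e * a ^ (2 * s) * t * a := by
        rw [show p + (p + g * a ^ s + e * a ^ (2 * s + 1)) =
          (p + p) + g * a ^ s + e * a ^ (2 * s + 1) by ring, add_idem]; ring
      _ ≤ (p + g * a ^ s) * t + e * a ^ (2 * s) * t := by
        exact add_le_add le_rfl (mul_le_of_le_one_right' ha)
      _ = b := by rw [hb]; ring
  have hb_eq : b = 1 := eq_one_of_add_eq_one_of_pow_le hbt htN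
  calc (p + g * a ^ s) * (p + g * a ^ s) * t
      = (p * p + (p * (g * a ^ s) + p * (g * a ^ s)) + (g * g) * a ^ (2 * s)) * t := by ring
    _ = p * b := by rw [add_idem, hg, hb]; ring
    _ = p := by rw [hb_eq, mul_one]

end IdempotentSemiring

section Subalgebra

variable {S L : Type*} [CommRing S] [CommRing L] [Algebra S L] {O : Subalgebra S L}

theorem mem_one_submodule_iff {x : L} : x ∈ (1 : Submodule O L) ↔ x ∈ O :=
  Submodule.mem_one.trans ⟨fun ⟨y, hy⟩ => hy ▸ y.2, fun hx => ⟨⟨x, hx⟩, rfl⟩⟩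

theorem algebraMap_mem_one_submodule (r : S) : algebraMap S L r ∈ (1 : Submodule O L) :=
  mem_one_submodule_iff.2 (O.algebraMap_mem r)

theorem mul_mem_of_mem_one {M : Submodule O L} {x y : L} (hx : x ∈ (1 : Submodule O L))
    (hy : y ∈ M) : x * y ∈ M :=
  M.smul_mem ⟨x, mem_one_submodule_iff.1 hx⟩ hy

theorem restrictScalars_mul_span (M : Submodule O L) (s : Set L) :
    (M * Submodule.span O s).restrictScalars S = M.restrictScalars S * Submodule.span S s := by
  rw [Submodule.restrictScalars_mul]
  refine le_antisymm (Submodule.mul_le.2 fun m hm x hx => ?_)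
    (mul_le_mul' le_rfl (Submodule.span_le_restrictScalars S O s))
  induction hx using Submodule.span_induction generalizing m with
  | mem x hx => exact Submodule.mul_mem_mul hm (Submodule.subset_span hx)
  | zero => rw [mul_zero]; exact zero_mem _
  | add x y _ _ hx hy => rw [mul_add]; exact add_mem (hx m hm) (hy m hm)
  | smul a x _ hx =>
    rw [mul_smul_comm, ← smul_mul_assoc]
    exact hx (a • m) (M.smul_mem a hm)

end Subalgebra

section FormPoly

variable {S T : Type*} [CommRing S] [CommRing T] (n : ℕ) (c : ℕ → S)

/-- The dehomogenization `F(x, 1)` of the binary form of degree `n` with coefficients `c`, over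
the ring of coefficients itself (`binPoly` is its base change to a field). -/
def formPoly : S[X] := ∑ i ∈ Finset.range (n + 1), C (c i) * X ^ (n - i)

theorem formPoly_succ : formPoly (n + 1) c = C (c 0) * X ^ (n + 1) + formPoly n (c ∘ Nat.succ) := by
  rw [formPoly, Finset.sum_range_succ', add_comm]
  simp [formPoly]

theorem formPoly_natDegree_le : (formPoly n c).natDegree ≤ n :=
  natDegree_sum_le_of_forall_le _ _ fun i _ => (natDegree_C_mul_X_pow_le _ _).trans (n.sub_le i)

theorem formPoly_coeff_sub {i : ℕ} (hi : i ≤ n) : (formPoly n c).coeff (n - i) = c i := by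
  rw [formPoly, finsetSum_coeff, Finset.sum_eq_single_of_mem i (Finset.mem_range_succ_iff.2 hi)]
  · simp
  · intro j hj hji
    rw [Finset.mem_range_succ_iff] at hj
    rw [coeff_C_mul_X_pow, if_neg (by omega)]

theorem formPoly_map (φ : S →+* T) : (formPoly n c).map φ = formPoly n (φ ∘ c) := by
  simp [formPoly, Polynomial.map_sum]

theorem binPoly_eq_map_formPoly (c : ℕ → R) :
    binPoly R K n c = (formPoly n c).map (algebraMap R K) := by
  simp [binPoly, formPoly, Polynomial.map_sum]

end FormPoly

section FormRing

variable {R K} {n : ℕ} {c : ℕ → R}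

local notation "θ" => θF R K n c
local notation "ζ" => ζF R K n c
local notation "ι" => algebraMap R (KF R K n c)

theorem ζF_zero : ζ 0 = 0 := by simp [ζF]

theorem ζF_succ (i : ℕ) : ζ (i + 1) = (ζ i + ι (c i)) * θ := by
  have hterm : ∀ j ∈ Finset.range i, ι (c j) * θ ^ (i + 1 - j) = ι (c j) * θ ^ (i - j) * θ := by
    intro j hj
    rw [Nat.succ_sub (Finset.mem_range.1 hj).le, pow_succ, mul_assoc]
  rw [ζF, ζF, Finset.sum_range_succ, Finset.sum_congr rfl hterm, ← Finset.sum_mul, add_mul]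
  simp

theorem ζF_one : ζ 1 = ι (c 0) * θ := by rw [ζF_succ, ζF_zero, zero_add]

theorem aeval_θF (q : R[X]) : aeval θ q = AdjoinRoot.mk _ (q.map (algebraMap R K)) := by
  rw [← AdjoinRoot.aeval_eq, aeval_map_algebraMap, θF]

theorem aeval_formPoly : aeval θ (formPoly n c) = 0 := by
  rw [aeval_θF, ← binPoly_eq_map_formPoly, AdjoinRoot.mk_self]

theorem ζF_degree : ζ n = -ι (c n) := by
  rw [eq_neg_iff_add_eq_zero, ← aeval_formPoly, formPoly, map_sum, Finset.sum_range_succ, ζF]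
  simp

theorem algebraMap_mem_RFmod (r : R) : ι r ∈ RFmod R K n c := by
  rw [Algebra.algebraMap_eq_smul_one]
  exact Submodule.smul_mem _ _ (Submodule.subset_span (Or.inl rfl))

theorem ζF_mem_RFmod {i : ℕ} (hi : i ≤ n) : ζ i ∈ RFmod R K n c := by
  rcases Nat.eq_zero_or_pos i with rfl | hpos
  · rw [ζF_zero]; exact zero_mem _
  rcases hi.eq_or_lt with rfl | hlt
  · rw [ζF_degree]; exact neg_mem (algebraMap_mem_RFmod _)
  · exact Submodule.subset_span (Or.inr ⟨i, hpos, by omega, rfl⟩)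

theorem ζF_mul_ζF_mem_RFmod {i j : ℕ} (hi : i ≤ n) (hj : j ≤ n) :
    ζ i * ζ j ∈ RFmod R K n c := by
  induction i generalizing j with
  | zero => rw [ζF_zero, zero_mul]; exact zero_mem _
  | succ i ih =>
    rcases hj.eq_or_lt with rfl | hlt
    · rw [ζF_degree, mul_neg, mul_comm, ← Algebra.smul_def]
      exact neg_mem (Submodule.smul_mem _ _ (ζF_mem_RFmod hi))
    · have hstep : ζ (i + 1) * ζ j = ζ i * ζ (j + 1) + c i • ζ (j + 1) - c j • ζ (i + 1) := by
        rw [Algebra.smul_def, Algebra.smul_def, ζF_succ i, ζF_succ j]; ring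
      rw [hstep]
      exact sub_mem (add_mem (ih (by omega) hlt) (Submodule.smul_mem _ _ (ζF_mem_RFmod hlt)))
        (Submodule.smul_mem _ _ (ζF_mem_RFmod hi))

theorem one_mem_RFmod : (1 : KF R K n c) ∈ RFmod R K n c := Submodule.subset_span (Or.inl rfl)

theorem mul_mem_RFmod {x y : KF R K n c} (hx : x ∈ RFmod R K n c) (hy : y ∈ RFmod R K n c) :
    x * y ∈ RFmod R K n c := by
  suffices hle : RFmod R K n c * RFmod R K n c ≤ RFmod R K n c from
    hle (Submodule.mul_mem_mul hx hy)
  conv_lhs => rw [RFmod, Submodule.span_mul_span]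
  refine Submodule.span_le.2 ?_
  rintro _ ⟨x, rfl | ⟨i, -, hi, rfl⟩, y, rfl | ⟨j, -, hj, rfl⟩, rfl⟩
  · simpa only [one_mul, SetLike.mem_coe] using one_mem_RFmod
  · simpa only [one_mul, SetLike.mem_coe] using ζF_mem_RFmod (by omega)
  · simpa only [mul_one, SetLike.mem_coe] using ζF_mem_RFmod (by omega)
  · exact ζF_mul_ζF_mem_RFmod (by omega) (by omega)

variable (R K n c) in
/-- Nakagawa's order `R_F`, i.e. `RFmod` with its ring structure. -/
def formRing : Subalgebra R (KF R K n c) :=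
  (RFmod R K n c).toSubalgebra one_mem_RFmod fun _ _ => mul_mem_RFmod

theorem mem_formRing_iff {x : KF R K n c} : x ∈ formRing R K n c ↔ x ∈ RFmod R K n c := Iff.rfl

theorem restrictScalars_one_formRing :
    (1 : Submodule (formRing R K n c) (KF R K n c)).restrictScalars R = RFmod R K n c :=
  Submodule.ext fun _ => mem_one_submodule_iff

theorem isInvIdeal_restrictScalars {M : Submodule (formRing R K n c) (KF R K n c)}
    (hM : IsUnit M) : IsInvIdeal R K n c (M.restrictScalars R) := by
  obtain ⟨N, hMN⟩ := hM.exists_right_inv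
  have stable (I : Submodule (formRing R K n c) (KF R K n c)) :
      IsStable R K n c (I.restrictScalars R) :=
    fun ρ hρ x hx => I.smul_mem ⟨ρ, hρ⟩ hx
  exact ⟨stable M, N.restrictScalars R, stable N,
    by rw [← Submodule.restrictScalars_mul, hMN, restrictScalars_one_formRing]⟩

theorem isIntegral_mem_formRing (hmax : IsMaxOrder R K n c) {x : KF R K n c}
    (hx : IsIntegral R x) : x ∈ formRing R K n c := by
  rw [mem_formRing_iff, hmax]; exact hx

theorem isIntegral_of_mem_formRing (hmax : IsMaxOrder R K n c) {x : KF R K n c}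
    (hx : x ∈ formRing R K n c) : IsIntegral R x := by
  rw [mem_formRing_iff, hmax] at hx; exact hx

end FormRing

section PrimitiveForm

variable {S T : Type*} [CommRing S] [CommRing T] {n : ℕ} {c : ℕ → S}

/-- The form of degree `n` with coefficients `c` is primitive: `c 0, …, c n` generate the unit
ideal. This is `PrimZ` over an arbitrary base. -/
def IsPrimitiveForm (n : ℕ) (c : ℕ → S) : Prop := Ideal.span (c '' Set.Iic n) = ⊤

theorem IsPrimitiveForm.comp_ringHom (h : IsPrimitiveForm n c) (φ : S →+* T) :
    IsPrimitiveForm n (φ ∘ c) := by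
  rw [IsPrimitiveForm, Set.image_comp, ← Ideal.map_span, h, Ideal.map_top]

theorem IsPrimitiveForm.exists_not_dvd (h : IsPrimitiveForm n c) {π : S} (hπ : ¬IsUnit π) :
    ∃ i ≤ n, ¬π ∣ c i := by
  by_contra! hdvd
  refine hπ (isUnit_of_dvd_one (Ideal.mem_span_singleton.1 ?_))
  suffices hle : Ideal.span (c '' Set.Iic n) ≤ Ideal.span {π} from hle (h ▸ Submodule.mem_top)
  rw [Ideal.span_le]
  rintro _ ⟨i, hi, rfl⟩
  exact Ideal.mem_span_singleton.2 (hdvd i hi)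

theorem IsPrimitiveForm.formPoly_map_ne_zero [Nontrivial T] (h : IsPrimitiveForm n c)
    (φ : S →+* T) : (formPoly n c).map φ ≠ 0 := by
  obtain ⟨i, hi, hci⟩ := (h.comp_ringHom φ).exists_not_dvd not_isUnit_zero
  intro hzero
  have hcoeff := formPoly_coeff_sub n (φ ∘ c) hi
  rw [← formPoly_map, hzero, coeff_zero] at hcoeff
  exact hci ⟨0, by rw [← hcoeff, zero_mul]⟩

theorem PrimZ.isPrimitiveForm {f : Fin (n + 1) → ℤ} (h : PrimZ n f) :
    IsPrimitiveForm n (fpad n f) := by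
  obtain ⟨g, hg⟩ := Finset.univ.gcd_eq_sum_mul f
  refine Ideal.eq_top_of_isUnit_mem _ ?_ h
  rw [hg]
  exact sum_mem fun i _ =>
    Ideal.mul_mem_right _ _ (Ideal.subset_span ⟨i, i.is_le, dif_pos i.is_lt⟩)

end PrimitiveForm

section Ideals

variable {R K} {n : ℕ} {c : ℕ → R}

local notation "θ" => θF R K n c
local notation "ζ" => ζF R K n c
local notation "ι" => algebraMap R (KF R K n c)
local notation "𝓞" => formRing R K n c

theorem pow_θF_mem_IFmod {j k : ℕ} (hjk : j ≤ k) : θ ^ j ∈ IFmod R K n c k :=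
  Submodule.subset_span (Or.inl ⟨j, hjk, rfl⟩)

theorem ζF_mem_IFmod {i : ℕ} (hi : i ≤ n) (k : ℕ) : ζ i ∈ IFmod R K n c k := by
  rcases le_or_gt i k with hik | hki
  · rw [ζF]
    refine sum_mem fun j _ => ?_
    rw [← Algebra.smul_def]
    exact Submodule.smul_mem _ _ (pow_θF_mem_IFmod (by omega))
  rcases hi.eq_or_lt with rfl | hlt
  · rw [ζF_degree, Algebra.algebraMap_eq_smul_one, ← pow_zero (θF R K i c)]
    exact neg_mem (Submodule.smul_mem _ _ (pow_θF_mem_IFmod k.zero_le))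
  · exact Submodule.subset_span (Or.inr ⟨i, hki, by omega, rfl⟩)

theorem IFmod_zero : IFmod R K n c 0 = RFmod R K n c := by
  simp [IFmod, RFmod, Set.singleton_union]

theorem IFmod_mul_span (k : ℕ) :
    IFmod R K n c k * Submodule.span R {1, θ} = IFmod R K n c (k + 1) := by
  apply le_antisymm
  · conv_lhs => rw [IFmod, Submodule.span_mul_span]
    refine Submodule.span_le.2 ?_
    rintro _ ⟨x, ⟨j, hj, rfl⟩ | ⟨i, hi, hin, rfl⟩, y, rfl | rfl, rfl⟩ <;>
      simp only [mul_one, SetLike.mem_coe]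
    · exact pow_θF_mem_IFmod (by omega)
    · rw [← pow_succ]; exact pow_θF_mem_IFmod (by omega)
    · exact ζF_mem_IFmod (by omega) _
    · rw [eq_sub_of_add_eq ((add_mul _ _ _).symm.trans (ζF_succ i).symm), ← Algebra.smul_def]
      refine sub_mem (ζF_mem_IFmod (by omega) _) (Submodule.smul_mem _ _ ?_)
      simpa only [pow_one] using pow_θF_mem_IFmod (Nat.le_add_left 1 k)
  · have hone : (1 : KF R K n c) ∈ Submodule.span R {1, θ} := Submodule.subset_span (by simp)
    have hθ : θ ∈ Submodule.span R {1, θ} := Submodule.subset_span (by simp)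
    refine Submodule.span_le.2 ?_
    rintro _ (⟨j, hj, rfl⟩ | ⟨i, hi, hin, rfl⟩) <;> rw [SetLike.mem_coe]
    · rcases hj.eq_or_lt with rfl | hlt
      · rw [pow_succ]; exact Submodule.mul_mem_mul (pow_θF_mem_IFmod le_rfl) hθ
      · rw [← mul_one (θ ^ j)]
        exact Submodule.mul_mem_mul (pow_θF_mem_IFmod (by omega)) hone
    · rw [← mul_one (ζ i)]; exact Submodule.mul_mem_mul (ζF_mem_IFmod (by omega) _) hone

variable (R K n c) in
/-- The fractional ideal `I_F = (1, θ)` of `R_F`. -/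
def formIdeal : Submodule 𝓞 (KF R K n c) := Submodule.span 𝓞 {1, θ}

theorem restrictScalars_formIdeal_pow (k : ℕ) :
    (formIdeal R K n c ^ k).restrictScalars R = IFmod R K n c k := by
  induction k with
  | zero => rw [pow_zero, restrictScalars_one_formRing, IFmod_zero]
  | succ k ih => rw [pow_succ, formIdeal, restrictScalars_mul_span, ← formIdeal, ih, IFmod_mul_span]

theorem mem_formIdeal_pow_iff {k : ℕ} {x : KF R K n c} :
    x ∈ formIdeal R K n c ^ k ↔ x ∈ IFmod R K n c k := by
  rw [← restrictScalars_formIdeal_pow, Submodule.restrictScalars_mem]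

theorem aeval_mem_formIdeal_pow {q : R[X]} {N : ℕ} (hq : q.natDegree ≤ N) :
    aeval θ q ∈ formIdeal R K n c ^ N := by
  rw [mem_formIdeal_pow_iff, aeval_eq_sum_range]
  exact sum_mem fun i hi => Submodule.smul_mem _ _
    (pow_θF_mem_IFmod ((Finset.mem_range_succ_iff.1 hi).trans hq))

theorem exists_aeval_eq_of_mem_formIdeal_pow {x : KF R K n c}
    (hx : x ∈ formIdeal R K n c ^ (n - 1)) : ∃ q : R[X], q.natDegree ≤ n - 1 ∧ aeval θ q = x := by
  suffices hle : IFmod R K n c (n - 1) ≤ (degreeLE R ↑(n - 1)).map (aeval θ).toLinearMap by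
    obtain ⟨q, hq, hqx⟩ := hle (mem_formIdeal_pow_iff.1 hx)
    exact ⟨q, natDegree_le_iff_degree_le.2 (mem_degreeLE.1 hq), hqx⟩
  refine Submodule.span_le.2 ?_
  rintro _ (⟨j, hj, rfl⟩ | ⟨i, hi, hin, rfl⟩)
  · exact ⟨X ^ j, mem_degreeLE.2 ((degree_X_pow_le j).trans (by exact_mod_cast hj)), by simp⟩
  · omega

variable (R K n c) in
/-- The ideal of denominators of `θ`, generated by the `ζ_i + f_i`. For primitive `F` it is the
inverse of `formIdeal`. The generator for `i = n` is zero, as `ζ_n = -f_n`. -/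
def denomIdeal : Submodule 𝓞 (KF R K n c) :=
  Submodule.span 𝓞 {x | ∃ i ≤ n, x = ζ i + ι (c i)}

theorem ζF_add_mem_denomIdeal {i : ℕ} (hi : i ≤ n) : ζ i + ι (c i) ∈ denomIdeal R K n c :=
  Submodule.subset_span ⟨i, hi, rfl⟩

theorem algebraMap_leadingCoeff_mem_denomIdeal : ι (c 0) ∈ denomIdeal R K n c := by
  simpa only [ζF_zero, zero_add] using ζF_add_mem_denomIdeal (R := R) (K := K) (c := c) n.zero_le

theorem ζF_mem_one {i : ℕ} (hi : i ≤ n) : ζ i ∈ (1 : Submodule 𝓞 (KF R K n c)) :=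
  mem_one_submodule_iff.2 (ζF_mem_RFmod hi)

theorem denomIdeal_le_one : denomIdeal R K n c ≤ 1 := by
  refine Submodule.span_le.2 ?_
  rintro _ ⟨i, hi, rfl⟩
  exact add_mem (ζF_mem_one hi) (algebraMap_mem_one_submodule _)

theorem ζF_add_mul_θF_mem_one {i : ℕ} (hi : i ≤ n) :
    (ζ i + ι (c i)) * θ ∈ (1 : Submodule 𝓞 (KF R K n c)) := by
  rcases hi.eq_or_lt with rfl | hlt
  · rw [ζF_degree, neg_add_cancel, zero_mul]; exact zero_mem _
  · rw [← ζF_succ]; exact ζF_mem_one hlt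

theorem denomIdeal_mul_formIdeal (hprim : IsPrimitiveForm n c) :
    denomIdeal R K n c * formIdeal R K n c = 1 := by
  set P := denomIdeal R K n c * formIdeal R K n c with hP
  apply le_antisymm
  · rw [hP, denomIdeal, formIdeal, Submodule.span_mul_span, Submodule.span_le]
    rintro _ ⟨_, ⟨i, hi, rfl⟩, y, rfl | rfl, rfl⟩
    · simpa only [mul_one, SetLike.mem_coe] using denomIdeal_le_one (ζF_add_mem_denomIdeal hi)
    · exact ζF_add_mul_θF_mem_one hi
  · have hone : (1 : KF R K n c) ∈ formIdeal R K n c := Submodule.subset_span (by simp)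
    have hθ : θ ∈ formIdeal R K n c := Submodule.subset_span (by simp)
    have hζ : ∀ i ≤ n, ζ i ∈ P := by
      rintro (_ | i) hi
      · rw [ζF_zero]; exact zero_mem _
      · rw [ζF_succ]; exact Submodule.mul_mem_mul (ζF_add_mem_denomIdeal (by omega)) hθ
    have hc : ∀ i ≤ n, ι (c i) ∈ P := by
      intro i hi
      rw [← add_sub_cancel_left (ζ i) (ι (c i))]
      refine sub_mem ?_ (hζ i hi)
      simpa only [mul_one] using Submodule.mul_mem_mul (ζF_add_mem_denomIdeal hi) hone
    have hle : Ideal.span (c '' Set.Iic n) ≤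
        (P.restrictScalars R).comap (Algebra.linearMap R (KF R K n c)) := by
      refine Submodule.span_le.2 ?_
      rintro _ ⟨i, hi, rfl⟩
      exact hc i hi
    have h1 : (1 : R) ∈ Ideal.span (c '' Set.Iic n) := hprim ▸ Submodule.mem_top
    exact Submodule.one_le.2 (by simpa using hle h1)

theorem aeval_mul_mem_denomIdeal_pow (hprim : IsPrimitiveForm n c) {q : R[X]} {m N : ℕ}
    (hqN : q.natDegree + m ≤ N) {a : KF R K n c} (ha : a ∈ denomIdeal R K n c ^ N) :
    aeval θ q * a ∈ denomIdeal R K n c ^ m := by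
  have hpow : formIdeal R K n c ^ (N - m) * denomIdeal R K n c ^ N = denomIdeal R K n c ^ m := by
    conv_lhs => rw [← Nat.sub_add_cancel ((Nat.le_add_left _ _).trans hqN), Nat.add_sub_cancel]
    rw [pow_add, ← mul_assoc, ← mul_pow, mul_comm (formIdeal R K n c),
      denomIdeal_mul_formIdeal hprim, one_pow, one_mul]
  rw [← hpow]
  exact Submodule.mul_mem_mul (aeval_mem_formIdeal_pow (by omega)) ha

theorem span_aeval_mul_denomIdeal_pow_le_one (hprim : IsPrimitiveForm n c) {q : R[X]} {N : ℕ}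
    (hq : q.natDegree ≤ N) : Submodule.span 𝓞 {aeval θ q} * denomIdeal R K n c ^ N ≤ 1 := by
  refine Submodule.mul_le.2 fun x hx a ha => ?_
  obtain ⟨r, rfl⟩ := Submodule.mem_span_singleton.1 hx
  rw [smul_mul_assoc, ← pow_zero (denomIdeal R K n c)]
  exact Submodule.smul_mem _ _ (aeval_mul_mem_denomIdeal_pow hprim hq ha)

theorem mem_formIdeal_pow_of_forall_mul_mem (hprim : IsPrimitiveForm n c) {N : ℕ}
    {y : KF R K n c} (hy : ∀ a ∈ denomIdeal R K n c ^ N, a * y ∈ 𝓞) :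
    y ∈ formIdeal R K n c ^ N := by
  have hle : denomIdeal R K n c ^ N * Submodule.span 𝓞 {y} ≤ 1 := by
    refine Submodule.mul_le.2 fun a ha x hx => ?_
    obtain ⟨r, rfl⟩ := Submodule.mem_span_singleton.1 hx
    rw [mul_smul_comm]
    exact Submodule.smul_mem _ _ (mem_one_submodule_iff.2 (hy a ha))
  suffices hspan : Submodule.span 𝓞 {y} ≤ formIdeal R K n c ^ N from
    hspan (Submodule.mem_span_singleton_self y)
  calc Submodule.span 𝓞 {y}
      = formIdeal R K n c ^ N * (denomIdeal R K n c ^ N * Submodule.span 𝓞 {y}) := by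
        rw [← mul_assoc, ← mul_pow, mul_comm (formIdeal R K n c),
          denomIdeal_mul_formIdeal hprim, one_pow, one_mul]
    _ ≤ formIdeal R K n c ^ N := mul_le_of_le_one_right' hle

variable (R K n c) in
/-- The principal ideal `r R_F` generated by a scalar `r` of the base ring. -/
def scalarIdeal (r : R) : Submodule 𝓞 (KF R K n c) := Submodule.span 𝓞 {ι r}

theorem algebraMap_mem_scalarIdeal (r : R) : ι r ∈ scalarIdeal R K n c r :=
  Submodule.mem_span_singleton_self _

theorem scalarIdeal_le_one (r : R) : scalarIdeal R K n c r ≤ 1 :=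
  (Submodule.span_singleton_le_iff_mem _ _).2 (algebraMap_mem_one_submodule r)

theorem scalarIdeal_mul (a b : R) :
    scalarIdeal R K n c (a * b) = scalarIdeal R K n c a * scalarIdeal R K n c b := by
  rw [scalarIdeal, scalarIdeal, scalarIdeal, Submodule.span_mul_span, Set.singleton_mul_singleton,
    map_mul]

theorem scalarIdeal_le_of_dvd {a b : R} (h : a ∣ b) :
    scalarIdeal R K n c b ≤ scalarIdeal R K n c a := by
  obtain ⟨d, rfl⟩ := h
  rw [scalarIdeal_mul]
  exact mul_le_of_le_one_right' (scalarIdeal_le_one d)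

theorem scalarIdeal_eq_of_associated {a b : R} (h : Associated a b) :
    scalarIdeal R K n c a = scalarIdeal R K n c b :=
  le_antisymm (scalarIdeal_le_of_dvd h.dvd') (scalarIdeal_le_of_dvd h.dvd)

theorem scalarIdeal_eq_one {r : R} (hr : IsUnit r) : scalarIdeal R K n c r = 1 := by
  rw [scalarIdeal_eq_of_associated (associated_one_iff_isUnit.2 hr), scalarIdeal, map_one,
    Submodule.one_eq_span]

theorem scalarIdeal_add_eq_one {a b : R} (h : IsCoprime a b) :
    scalarIdeal R K n c a + scalarIdeal R K n c b = 1 := by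
  refine le_antisymm (add_le (scalarIdeal_le_one a) (scalarIdeal_le_one b)) ?_
  obtain ⟨x, y, hxy⟩ := h
  rw [Submodule.one_le, ← map_one (algebraMap R (KF R K n c)), ← hxy, map_add, map_mul, map_mul]
  exact Submodule.add_mem_sup
    (mul_mem_of_mem_one (algebraMap_mem_one_submodule x) (algebraMap_mem_scalarIdeal a))
    (mul_mem_of_mem_one (algebraMap_mem_one_submodule y) (algebraMap_mem_scalarIdeal b))

theorem isUnit_scalarIdeal {r : R} (hr : IsUnit (ι r)) : IsUnit (scalarIdeal R K n c r) := by
  obtain ⟨x, hx⟩ := hr.exists_right_inv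
  refine IsUnit.of_mul_eq_one (Submodule.span 𝓞 {x}) ?_
  rw [scalarIdeal, Submodule.span_mul_span, Set.singleton_mul_singleton, hx, Submodule.one_eq_span]

theorem scalarIdeal_leadingCoeff_le_denomIdeal :
    scalarIdeal R K n c (c 0) ≤ denomIdeal R K n c :=
  (Submodule.span_singleton_le_iff_mem _ _).2 algebraMap_leadingCoeff_mem_denomIdeal

theorem scalarIdeal_mul_denomIdeal_le (hn : 1 ≤ n) :
    scalarIdeal R K n c (c 1) * denomIdeal R K n c ≤
      denomIdeal R K n c * denomIdeal R K n c + scalarIdeal R K n c (c 0) := by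
  rw [scalarIdeal, denomIdeal, Submodule.span_mul_span, Submodule.span_le, ← denomIdeal,
    Set.singleton_mul, Set.image_subset_iff]
  rintro _ ⟨i, hi, rfl⟩
  have hsplit : ι (c 1) * (ζ i + ι (c i)) =
      (ζ 1 + ι (c 1)) * (ζ i + ι (c i)) + -((ζ i + ι (c i)) * θ * ι (c 0)) := by
    rw [ζF_one]; ring
  rw [Set.mem_preimage, hsplit]
  exact Submodule.add_mem_sup
    (Submodule.mul_mem_mul (ζF_add_mem_denomIdeal hn) (ζF_add_mem_denomIdeal hi))
    (neg_mem (mul_mem_of_mem_one (ζF_add_mul_θF_mem_one hi) (algebraMap_mem_scalarIdeal _)))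

theorem scalarIdeal_add_denomIdeal_mul (hn : 1 ≤ n) {a b : R} (hab : a * b ∣ c 0)
    (hone : scalarIdeal R K n c a + scalarIdeal R K n c b + scalarIdeal R K n c (c 1) = 1) :
    (scalarIdeal R K n c a + denomIdeal R K n c) * (scalarIdeal R K n c b + denomIdeal R K n c) =
      scalarIdeal R K n c (a * b) + denomIdeal R K n c := by
  rw [scalarIdeal_mul]
  refine add_mul_add_eq_mul_add denomIdeal_le_one hone ((scalarIdeal_mul_denomIdeal_le hn).trans ?_)
  rw [← scalarIdeal_mul]
  exact add_le_add le_rfl (scalarIdeal_le_of_dvd hab)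

end Ideals

section MaximalOrder

variable {R K} {n : ℕ} {c : ℕ → R}

local notation "θ" => θF R K n c
local notation "ι" => algebraMap R (KF R K n c)

theorem isIntegral_of_sq_add_mul_add_eq_zero {S A : Type*} [CommRing S] [CommRing A] [Algebra S A]
    {y b d : A} (hb : IsIntegral S b) (hd : IsIntegral S d) (h : y ^ 2 + b * y + d = 0) :
    IsIntegral S y := by
  let b' : integralClosure S A := ⟨b, hb⟩
  let d' : integralClosure S A := ⟨d, hd⟩
  refine isIntegral_trans (A := integralClosure S A) y ⟨X ^ 2 + (C b' * X + C d'), ?_, ?_⟩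
  · exact monic_X_pow_add degree_linear_lt
  · rw [← aeval_def, ← h]
    simp [b', d', add_assoc]

theorem mem_formIdeal_pow_of_sq_add_eq_zero (hprim : IsPrimitiveForm n c)
    (hmax : IsMaxOrder R K n c) {m : ℕ} {b d : R[X]} (hb : b.natDegree ≤ m)
    (hd : d.natDegree ≤ 2 * m) {y : KF R K n c} (hy : y ^ 2 + aeval θ b * y + aeval θ d = 0) :
    y ∈ formIdeal R K n c ^ m := by
  refine mem_formIdeal_pow_of_forall_mul_mem hprim fun a ha => ?_
  have hba : aeval θ b * a ∈ formRing R K n c := by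
    rw [← mem_one_submodule_iff, ← pow_zero (denomIdeal R K n c)]
    exact aeval_mul_mem_denomIdeal_pow hprim (by omega) ha
  have hda : aeval θ d * a ^ 2 ∈ formRing R K n c := by
    rw [← mem_one_submodule_iff, ← pow_zero (denomIdeal R K n c)]
    refine aeval_mul_mem_denomIdeal_pow hprim (N := m * 2) (by omega) ?_
    rw [pow_mul]
    exact Submodule.pow_mem_pow _ ha 2
  refine isIntegral_mem_formRing hmax (isIntegral_of_sq_add_mul_add_eq_zero
    (isIntegral_of_mem_formRing hmax hba) (isIntegral_of_mem_formRing hmax hda) ?_)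
  linear_combination a ^ 2 * hy

section Faithful

variable [FaithfulSMul R K]

theorem eq_zero_of_aeval_θF_eq_zero (h0 : c 0 ≠ 0) {q : R[X]} (hq : q.natDegree < n)
    (hroot : aeval θ q = 0) : q = 0 := by
  have hinj := FaithfulSMul.algebraMap_injective R K
  have hcoeff : (formPoly n c).coeff n ≠ 0 := by
    simpa only [Nat.sub_zero] using (formPoly_coeff_sub n c n.zero_le).trans_ne h0
  rw [aeval_θF, AdjoinRoot.mk_eq_zero, binPoly_eq_map_formPoly] at hroot
  refine (Polynomial.map_eq_zero_iff hinj).1 (eq_zero_of_dvd_of_natDegree_lt hroot ?_)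
  rw [natDegree_map_eq_of_injective hinj, natDegree_map_eq_of_injective hinj]
  exact hq.trans_le (le_natDegree_of_ne_zero hcoeff)

theorem isUnit_algebraMap_KF {r : R} (hr : r ≠ 0) : IsUnit (ι r) := by
  rw [IsScalarTower.algebraMap_apply R K]
  exact (IsUnit.mk0 _ ((map_ne_zero_iff _ (FaithfulSMul.algebraMap_injective R K)).2 hr)).map _

/- The element `w(θ) / π` is a root of a monic quadratic whose coefficients, after scaling by
`denomIdeal ^ (n - 1)`, are integral; by maximality it lies in the fractional ideal
`formIdeal ^ (n - 1)`, which is spanned by the powers of `θ` below `n`. -/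
theorem C_dvd_of_formPoly_dvd (h0 : c 0 ≠ 0) (hprim : IsPrimitiveForm n c)
    (hmax : IsMaxOrder R K n c) {π : R} (hπ : π ≠ 0) {w b d : R[X]} (hw : w.natDegree < n)
    (hb : b.natDegree < n) (hd : d.natDegree ≤ 2 * (n - 1))
    (hdvd : formPoly n c ∣ w ^ 2 + C π * b * w + C π ^ 2 * d) : C π ∣ w := by
  obtain ⟨y, hy⟩ := (isUnit_algebraMap_KF (K := K) (n := n) (c := c) hπ).dvd (a := aeval θ w)
  have hrel : ι π ^ 2 * (y ^ 2 + aeval θ b * y + aeval θ d) = 0 := by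
    obtain ⟨q, hq⟩ := hdvd
    have hq_eval := congrArg (aeval θ) hq
    simp only [map_mul, map_add, map_pow, aeval_C, aeval_formPoly, zero_mul, hy] at hq_eval
    linear_combination hq_eval
  have hquad := ((isUnit_algebraMap_KF hπ).pow 2).mul_right_eq_zero.1 hrel
  obtain ⟨v, hv, rfl⟩ := exists_aeval_eq_of_mem_formIdeal_pow
    (mem_formIdeal_pow_of_sq_add_eq_zero hprim hmax (by omega) hd hquad)
  refine ⟨v, sub_eq_zero.1 (eq_zero_of_aeval_θF_eq_zero (K := K) (n := n) h0 ?_ ?_)⟩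
  · have hπv : (C π * v).natDegree ≤ n - 1 := (natDegree_C_mul_le _ _).trans hv
    exact (natDegree_sub_le_of_le (Nat.le_sub_one_of_lt hw) hπv).trans_lt (by omega)
  · rw [map_sub, map_mul, aeval_C, hy, sub_self]

theorem not_dvd_of_sq_dvd_leadingCoeff (hn : 2 ≤ n) (h0 : c 0 ≠ 0) (hprim : IsPrimitiveForm n c)
    (hmax : IsMaxOrder R K n c) {π : R} (hπ : ¬IsUnit π) (hsq : π ^ 2 ∣ c 0) : ¬π ∣ c 1 := by
  rintro ⟨e, he⟩
  obtain ⟨m, hm⟩ := hsq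
  obtain ⟨l, rfl⟩ := Nat.exists_eq_add_of_le' hn
  set a := formPoly l (c ∘ Nat.succ ∘ Nat.succ) with ha
  have hform : formPoly (l + 2) c =
      a + C π * (C e * X ^ (l + 1)) + C π ^ 2 * (C m * X ^ (l + 2)) := by
    rw [formPoly_succ, formPoly_succ, Function.comp_assoc, ← ha, Function.comp_apply, he, hm]
    simp only [map_mul, map_pow]
    ring
  have ha_deg : a.natDegree ≤ l := formPoly_natDegree_le l _
  have hπ_dvd : C π ∣ a := by
    refine C_dvd_of_formPoly_dvd h0 hprim hmax ?_ (b := C e * X ^ (l + 1))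
      (d := C m * X ^ (l + 2) * a) (by omega) ?_ ?_ ⟨a, by rw [hform]; ring⟩
    · rintro rfl
      exact h0 (by simpa using hm)
    · exact (natDegree_C_mul_X_pow_le _ _).trans_lt (by omega)
    · exact (natDegree_mul_le_of_le (natDegree_C_mul_X_pow_le _ _) ha_deg).trans (by omega)
  obtain ⟨i, hi, hndvd⟩ := hprim.exists_not_dvd hπ
  match i with
  | 0 => exact hndvd (hm ▸ (dvd_pow_self π two_ne_zero).mul_right m)
  | 1 => exact hndvd ⟨e, he⟩
  | i + 2 =>
    have hcoeff := (C_dvd_iff_dvd_coeff _ _).1 hπ_dvd (l - i)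
    rw [ha, formPoly_coeff_sub _ _ (by omega)] at hcoeff
    exact hndvd hcoeff

end Faithful

end MaximalOrder

section ResidueField

variable {R K} {S k : Type*} [CommRing S] [Field k] {π : S} {φ : S →+* k}

theorem map_generator_of_ker_eq_span (hker : RingHom.ker φ = Ideal.span {π}) : φ π = 0 := by
  rw [← RingHom.mem_ker, hker]
  exact Ideal.mem_span_singleton_self π

theorem map_ne_zero_of_not_dvd (hker : RingHom.ker φ = Ideal.span {π}) {x : S} (hx : ¬π ∣ x) :
    φ x ≠ 0 := by
  rwa [Ne, ← RingHom.mem_ker, hker, Ideal.mem_span_singleton]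

theorem isCoprime_of_map_ne_zero (hφ : Function.Surjective φ)
    (hker : RingHom.ker φ = Ideal.span {π}) {x : S} (hx : φ x ≠ 0) : IsCoprime x π := by
  obtain ⟨y, hy⟩ := hφ (φ x)⁻¹
  have hmem : 1 - y * x ∈ RingHom.ker φ := by
    rw [RingHom.mem_ker, map_sub, map_mul, map_one, hy, inv_mul_cancel₀ hx, sub_self]
  rw [hker, Ideal.mem_span_singleton'] at hmem
  obtain ⟨z, hz⟩ := hmem
  exact ⟨y, z, by rw [hz]; ring⟩

theorem exists_eq_C_mul_of_map_eq_zero [IsDomain S] (hker : RingHom.ker φ = Ideal.span {π})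
    {q : S[X]} (hq : q.map φ = 0) : ∃ r : S[X], q = C π * r ∧ r.natDegree ≤ q.natDegree := by
  obtain ⟨r, rfl⟩ : C π ∣ q := by
    refine (C_dvd_iff_dvd_coeff _ _).2 fun i => Ideal.mem_span_singleton.1 (hker ▸ ?_)
    rw [RingHom.mem_ker, ← coeff_map, hq, coeff_zero]
  by_cases hπ : π = 0
  · exact ⟨0, by simp [hπ], by simp⟩
  · exact ⟨r, rfl, (natDegree_C_mul hπ).ge⟩

theorem exists_lift_mul_add [IsDomain S] (hφ : Function.Surjective φ)
    (hker : RingHom.ker φ = Ideal.span {π}) {m : ℕ} {h q : S[X]}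
    (hh : h.natDegree = (h.map φ).natDegree) (hh0 : h.map φ ≠ 0) (hhm : h.natDegree ≤ m)
    (hqm : q.natDegree ≤ m) (hdvd : h.map φ ∣ q.map φ) :
    ∃ g r : S[X], q = h * g + C π * r ∧ h.natDegree + g.natDegree ≤ m ∧ r.natDegree ≤ m := by
  obtain ⟨g', hg'⟩ := hdvd
  obtain ⟨g, rfl, hg⟩ := exists_natDegree_eq_of_mem_lifts (mem_lifts_of_surjective hφ g')
  have hhg : h.natDegree + g.natDegree ≤ m := by
    by_cases hg0 : g.map φ = 0
    · rwa [hg, hg0, natDegree_zero, add_zero]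
    · rw [hh, hg, ← natDegree_mul hh0 hg0, ← hg']
      exact natDegree_map_le.trans hqm
  obtain ⟨r, hr, hr_deg⟩ := exists_eq_C_mul_of_map_eq_zero hker (q := q - h * g) (by
    rw [Polynomial.map_sub, Polynomial.map_mul, hg', sub_self])
  refine ⟨g, r, sub_eq_iff_eq_add'.1 hr, hhg, hr_deg.trans ?_⟩
  exact (natDegree_sub_le_of_le hqm (natDegree_mul_le.trans hhg)).trans (max_self m).le

/- If the reductions of `G` and `E` had a common factor `h`, then `F` would lie, up to a unit, in
`(π, h) ^ 2`, contradicting Dedekind's criterion. -/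
theorem isCoprime_map_of_isMaxOrder [FaithfulSMul R K] {n : ℕ} {c : ℕ → R} (h0 : c 0 ≠ 0)
    (hprim : IsPrimitiveForm n c) (hmax : IsMaxOrder R K n c) {π : R} (hπ : π ≠ 0) {φ : R →+* k}
    (hφ : Function.Surjective φ) (hker : RingHom.ker φ = Ideal.span {π}) {s : ℕ} (hs : 2 * s ≤ n)
    {u : R} {G E : R[X]} (hG : G.natDegree ≤ s) (hE : E.natDegree ≤ n)
    (hrel : C u * formPoly n c = G ^ 2 + C π * E) (hG0 : G.map φ ≠ 0) :
    IsCoprime (G.map φ) (E.map φ) := by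
  have : IsDomain R := (FaithfulSMul.algebraMap_injective R K).isDomain
  refine isCoprime_of_irreducible_dvd (fun h => hG0 h.1) fun h' hirr hh'G hh'E => ?_
  obtain ⟨h, rfl, hh⟩ := exists_natDegree_eq_of_mem_lifts (mem_lifts_of_surjective hφ h')
  have hh_pos : 0 < h.natDegree := hh ▸ hirr.natDegree_pos
  have hhs : h.natDegree ≤ s := by
    rw [hh]
    exact (natDegree_le_of_dvd hh'G hG0).trans (natDegree_map_le.trans hG)
  obtain ⟨g, g₁, rfl, hg, hg₁⟩ := exists_lift_mul_add hφ hker hh hirr.ne_zero hhs hG hh'G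
  obtain ⟨e, e₁, rfl, he, he₁⟩ :=
    exists_lift_mul_add hφ hker hh hirr.ne_zero (by omega) hE hh'E
  have hmapπ : φ π = 0 := map_generator_of_ker_eq_span hker
  have hg_map : g.map φ ≠ 0 := by
    rintro hg0
    simp [hg0, hmapπ] at hG0
  have hπ_dvd : C π ∣ h * g ^ 2 := by
    refine C_dvd_of_formPoly_dvd h0 hprim hmax hπ (b := C 2 * g * g₁ + e)
      (d := g ^ 2 * (g₁ ^ 2 + e₁)) ?_ ?_ ?_ ⟨C u * g ^ 2, ?_⟩
    · exact (natDegree_mul_le_of_le le_rfl (natDegree_pow_le_of_le 2 le_rfl)).trans_lt (by omega)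
    · refine (natDegree_add_le_of_degree_le (n := n - 1) ?_ (by omega)).trans_lt (by omega)
      exact (natDegree_mul_le_of_le (natDegree_C_mul_le 2 g) hg₁).trans (by omega)
    · refine (natDegree_mul_le_of_le (natDegree_pow_le_of_le 2 le_rfl)
        (natDegree_add_le_of_degree_le (n := n) ?_ he₁)).trans (by omega)
      exact (natDegree_pow_le_of_le 2 hg₁).trans (by omega)
    · simp only [C_ofNat]
      linear_combination -g ^ 2 * hrel
  obtain ⟨v, hv⟩ := hπ_dvd
  have hv_map := congrArg (Polynomial.map φ) hv
  simp only [Polynomial.map_mul, Polynomial.map_pow, map_C, hmapπ, C_0, zero_mul] at hv_map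
  exact mul_ne_zero hirr.ne_zero (pow_ne_zero 2 hg_map) hv_map

end ResidueField

section LocalSquareRoot

variable {R K} {n : ℕ} {c : ℕ → R} {k : Type*} [Field k] {φ : R →+* k} {π u : R} {G E : R[X]}

local notation "θ" => θF R K n c
local notation "ζ" => ζF R K n c
local notation "ι" => algebraMap R (KF R K n c)
local notation "𝓞" => formRing R K n c
local notation "𝔞" => denomIdeal R K n c
local notation "⟪" r "⟫" => scalarIdeal R K n c r

theorem exists_denomIdeal_pow_le [IsDomain R] (hprim : IsPrimitiveForm n c)
    (hφ : Function.Surjective φ) (hker : RingHom.ker φ = Ideal.span {π})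
    (hcop : IsCoprime (G.map φ) (E.map φ)) (s m : ℕ) :
    ∃ N, 𝔞 ^ N ≤ ⟪π⟫ + Submodule.span 𝓞 {aeval θ G} * 𝔞 ^ s +
      Submodule.span 𝓞 {aeval θ E} * 𝔞 ^ m := by
  obtain ⟨U', V', hUV⟩ := hcop
  obtain ⟨U, rfl⟩ := map_surjective φ hφ U'
  obtain ⟨V, rfl⟩ := map_surjective φ hφ V'
  obtain ⟨W, hW, -⟩ := exists_eq_C_mul_of_map_eq_zero hker (q := 1 - (U * G + V * E)) (by
    simp only [Polynomial.map_sub, Polynomial.map_one, Polynomial.map_add, Polynomial.map_mul, hUV,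
      sub_self])
  refine ⟨U.natDegree + s + (V.natDegree + m) + W.natDegree, fun a ha => ?_⟩
  have hW_eval := congrArg (aeval θ) hW
  simp only [map_sub, map_one, map_add, map_mul, aeval_C] at hW_eval
  have hsplit : a = aeval θ W * a * ι π + aeval θ G * (aeval θ U * a) +
      aeval θ E * (aeval θ V * a) := by
    linear_combination a * hW_eval
  have hWa : aeval θ W * a ∈ (1 : Submodule 𝓞 (KF R K n c)) := by
    rw [← pow_zero 𝔞]
    exact aeval_mul_mem_denomIdeal_pow hprim (by omega) ha
  rw [hsplit]
  exact Submodule.add_mem_sup (Submodule.add_mem_sup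
    (mul_mem_of_mem_one hWa (algebraMap_mem_scalarIdeal π))
    (Submodule.mul_mem_mul (Submodule.mem_span_singleton_self _)
      (aeval_mul_mem_denomIdeal_pow hprim (by omega) ha)))
    (Submodule.mul_mem_mul (Submodule.mem_span_singleton_self _)
      (aeval_mul_mem_denomIdeal_pow hprim (by omega) ha))

theorem ζF_pow_sub_mem_denomIdeal {i : ℕ} (hi : i ≤ n) (N : ℕ) :
    ζ i ^ N - ι ((-c i) ^ N) ∈ 𝔞 := by
  let z : 𝓞 := ⟨ζ i, ζF_mem_RFmod hi⟩
  obtain ⟨d, hd⟩ := sub_dvd_pow_sub_pow z (algebraMap R 𝓞 (-c i)) N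
  have hd' : ζ i ^ N - ι ((-c i) ^ N) = d * (ζ i + ι (c i)) := by
    have hd_coe := congrArg (Subtype.val) hd
    simp only [Subalgebra.coe_mul, Subalgebra.coe_sub, Subalgebra.coe_pow,
      Subalgebra.coe_algebraMap, z] at hd_coe
    rw [map_pow, hd_coe, map_neg, sub_neg_eq_add, mul_comm]
  rw [hd']
  exact Submodule.smul_mem _ d (ζF_add_mem_denomIdeal hi)

/- Removing the top term from `E` leaves degree at most `m`, so `𝔞 ^ m` clears its denominators. -/
theorem coeff_mul_pow_mul_mem (hprim : IsPrimitiveForm n c) {m : ℕ} (hE : E.natDegree ≤ m + 1)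
    {T : Submodule 𝓞 (KF R K n c)} {a t : KF R K n c} (ha : a ∈ 𝔞 ^ m) (ht : t ∈ T) :
    ι (E.coeff (m + 1)) * θ ^ (m + 1) * a * t ∈
      Submodule.span 𝓞 {aeval θ E} * 𝔞 ^ m * T + T := by
  have hdeg : (E.erase (m + 1)).natDegree ≤ m := by
    refine natDegree_le_iff_coeff_eq_zero.2 fun N hN => ?_
    rcases Nat.eq_or_lt_of_le hN with rfl | hlt
    · exact erase_same _ _
    · rw [erase_ne E (by omega), coeff_eq_zero_of_natDegree_lt (by omega)]
  have hsplit : ι (E.coeff (m + 1)) * θ ^ (m + 1) * a * t =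
      aeval θ E * a * t + -(aeval θ (E.erase (m + 1)) * a * t) := by
    conv_rhs => enter [1, 1, 1]; rw [← monomial_add_erase E (m + 1)]
    rw [map_add, aeval_monomial]
    ring
  have hlower : aeval θ (E.erase (m + 1)) * a ∈ (1 : Submodule 𝓞 (KF R K n c)) := by
    rw [← pow_zero 𝔞]
    exact aeval_mul_mem_denomIdeal_pow hprim (by omega) ha
  rw [hsplit]
  exact Submodule.add_mem_sup
    (Submodule.mul_mem_mul (Submodule.mul_mem_mul (Submodule.mem_span_singleton_self _) ha) ht)
    (neg_mem (mul_mem_of_mem_one hlower ht))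

theorem one_le_of_algebraMap_mem {M : Submodule 𝓞 (KF R K n c)} {x : R} (hcop : IsCoprime x π)
    (hx : ι x ∈ M) (hπ : ⟪π⟫ ≤ M) : 1 ≤ M :=
  (scalarIdeal_add_eq_one hcop).ge.trans
    (add_le ((Submodule.span_singleton_le_iff_mem _ _).2 hx) hπ)

theorem one_le_of_map_coeff_ne_zero (hprim : IsPrimitiveForm n c) (hφ : Function.Surjective φ)
    (hker : RingHom.ker φ = Ideal.span {π}) {m i : ℕ} (hn : n = m + 1) (hi : i < n)
    (hci : φ (c (i + 1)) ≠ 0) (hE : E.natDegree ≤ n) (hEn : φ (E.coeff n) ≠ 0) :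
    1 ≤ Submodule.span 𝓞 {aeval θ E} * 𝔞 ^ m * (⟪π⟫ + 𝔞) + (⟪π⟫ + 𝔞) := by
  set M := Submodule.span 𝓞 {aeval θ E} * 𝔞 ^ m * (⟪π⟫ + 𝔞) + (⟪π⟫ + 𝔞) with hM
  have hTM : ⟪π⟫ + 𝔞 ≤ M := le_sup_right
  obtain ⟨hπM, h𝔞M⟩ := add_le_iff.1 hTM
  set w := ζ i + ι (c i) with hw
  have hw_mem : w ∈ 𝔞 := ζF_add_mem_denomIdeal hi.le
  have hwM : ι (E.coeff n) * θ ^ n * w ^ m * w ∈ M := by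
    subst hn
    exact coeff_mul_pow_mul_mem hprim hE (Submodule.pow_mem_pow _ hw_mem m)
      (Submodule.mem_sup_right hw_mem)
  have hwθ : ι (E.coeff n) * θ ^ n * w ^ m * w = ι (E.coeff n) * ζ (i + 1) ^ n := by
    rw [mul_assoc _ (w ^ m), ← pow_succ, ← hn, mul_assoc, ← mul_pow, mul_comm θ, ζF_succ]
  have hcongr : ι (E.coeff n) * (ζ (i + 1) ^ n - ι ((-c (i + 1)) ^ n)) ∈ M :=
    mul_mem_of_mem_one (algebraMap_mem_one_submodule _) (h𝔞M (ζF_pow_sub_mem_denomIdeal hi n))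
  refine one_le_of_algebraMap_mem (x := E.coeff n * (-c (i + 1)) ^ n)
    (isCoprime_of_map_ne_zero hφ hker ?_) ?_ hπM
  · simpa [hEn] using fun h => absurd h hci
  · rw [map_mul, ← sub_sub_cancel (ι (E.coeff n) * ζ (i + 1) ^ n) (_ * _), ← mul_sub, ← hwθ]
    exact sub_mem hwM hcongr

theorem one_le_of_mul_coeff_eq (hprim : IsPrimitiveForm n c) (hφ : Function.Surjective φ)
    (hker : RingHom.ker φ = Ideal.span {π}) {m : ℕ} (hn : n = m + 1) (hc1 : φ (c 1) ≠ 0)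
    (hu : φ u ≠ 0) (hE : E.natDegree ≤ n) (hEn : π * E.coeff n = u * c 0) :
    1 ≤ Submodule.span 𝓞 {aeval θ E} * 𝔞 ^ m * (⟪π⟫ + 𝔞) + (⟪π⟫ + 𝔞) := by
  set M := Submodule.span 𝓞 {aeval θ E} * 𝔞 ^ m * (⟪π⟫ + 𝔞) + (⟪π⟫ + 𝔞) with hM
  have hTM : ⟪π⟫ + 𝔞 ≤ M := le_sup_right
  obtain ⟨hπM, h𝔞M⟩ := add_le_iff.1 hTM
  have hc0M : ι (E.coeff n) * θ ^ n * ι (c 0) ^ m * ι π ∈ M := by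
    subst hn
    exact coeff_mul_pow_mul_mem hprim hE
      (Submodule.pow_mem_pow _ algebraMap_leadingCoeff_mem_denomIdeal m)
      (Submodule.mem_sup_left (algebraMap_mem_scalarIdeal π))
  have hc0θ : ι (E.coeff n) * θ ^ n * ι (c 0) ^ m * ι π = ι u * ζ 1 ^ n := by
    have hEn_map := congrArg ι hEn
    simp only [map_mul] at hEn_map
    calc ι (E.coeff n) * θ ^ n * ι (c 0) ^ m * ι π
        = ι π * ι (E.coeff n) * θ ^ n * ι (c 0) ^ m := by ring
      _ = ι u * (θ ^ n * ι (c 0) ^ (m + 1)) := by rw [hEn_map]; ring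
      _ = ι u * ζ 1 ^ n := by rw [← hn, ← mul_pow, ζF_one, mul_comm θ]
  have hcongr : ι u * (ζ 1 ^ n - ι ((-c 1) ^ n)) ∈ M :=
    mul_mem_of_mem_one (algebraMap_mem_one_submodule _)
      (h𝔞M (ζF_pow_sub_mem_denomIdeal (by omega) n))
  refine one_le_of_algebraMap_mem (x := u * (-c 1) ^ n)
    (isCoprime_of_map_ne_zero hφ hker ?_) ?_ hπM
  · simpa [hu] using fun h => absurd h hc1
  · rw [map_mul, ← sub_sub_cancel (ι u * ζ 1 ^ n) (_ * _), ← mul_sub, ← hc0θ]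
    exact sub_mem hc0M hcongr

theorem exists_mul_self_mul_add_eq_scalarIdeal [IsDomain R] (hprim : IsPrimitiveForm n c)
    (hφ : Function.Surjective φ) (hker : RingHom.ker φ = Ideal.span {π}) {s : ℕ}
    (hn : n = 2 * s + 1) (hc0 : π ∣ c 0) (hc1 : π ^ 2 ∣ c 0 → ¬π ∣ c 1)
    (hu : φ u ≠ 0) (hG : G.natDegree ≤ s) (hE : E.natDegree ≤ n)
    (hrel : C u * formPoly n c = G ^ 2 + C π * E) (hcop : IsCoprime (G.map φ) (E.map φ)) :
    ∃ Q : Submodule 𝓞 (KF R K n c), Q * Q * (⟪π⟫ + 𝔞) = ⟪π⟫ := by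
  have hGG : Submodule.span 𝓞 {aeval θ G} * Submodule.span 𝓞 {aeval θ G} =
      ⟪π⟫ * Submodule.span 𝓞 {aeval θ E} := by
    have hrel_eval := congrArg (aeval θ) hrel
    simp only [map_mul, map_add, map_pow, aeval_C, aeval_formPoly, mul_zero] at hrel_eval
    rw [scalarIdeal, Submodule.span_mul_span, Submodule.span_mul_span, Set.singleton_mul_singleton,
      Set.singleton_mul_singleton, ← sq, eq_neg_of_add_eq_zero_left hrel_eval.symm,
      ← Set.neg_singleton, Submodule.span_neg]
  have hEn : π * E.coeff n = u * c 0 := by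
    have hG_coeff : (G ^ 2).coeff n = 0 :=
      coeff_eq_zero_of_natDegree_lt ((natDegree_pow_le_of_le 2 hG).trans_lt (by omega))
    have hF_coeff : (formPoly n c).coeff n = c 0 := formPoly_coeff_sub n c n.zero_le
    have hcoeff := congrArg (coeff · n) hrel
    simpa only [coeff_C_mul, coeff_add, hF_coeff, hG_coeff, zero_add] using hcoeff.symm
  have hone : 1 ≤ Submodule.span 𝓞 {aeval θ E} * 𝔞 ^ (2 * s) * (⟪π⟫ + 𝔞) + (⟪π⟫ + 𝔞) := by
    by_cases hφE : φ (E.coeff n) = 0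
    · refine one_le_of_mul_coeff_eq hprim hφ hker hn
        (map_ne_zero_of_not_dvd hker (hc1 ?_)) hu hE hEn
      rw [← RingHom.mem_ker, hker, Ideal.mem_span_singleton] at hφE
      refine (isCoprime_of_map_ne_zero hφ hker hu).symm.pow_left.dvd_of_dvd_mul_left ?_
      rw [← hEn, sq]
      exact mul_dvd_mul_left π hφE
    · obtain ⟨j, hj, hcj⟩ := (hprim.comp_ringHom φ).exists_not_dvd not_isUnit_zero
      obtain _ | i := j
      · exact absurd (map_dvd φ hc0) (by rwa [map_generator_of_ker_eq_span hker])
      · exact one_le_of_map_coeff_ne_zero hprim hφ hker hn hj (by simpa using hcj) hE hφE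
  obtain ⟨N, hN⟩ := exists_denomIdeal_pow_le (K := K) hprim hφ hker hcop s (2 * s + 1)
  exact ⟨_, mul_self_mul_add_eq denomIdeal_le_one (scalarIdeal_le_one π) hGG
    (span_aeval_mul_denomIdeal_pow_le_one hprim hG)
    (span_aeval_mul_denomIdeal_pow_le_one hprim (hE.trans hn.le)) hN hone⟩

theorem exists_sq_add_eq_of_formPoly_map_eq [IsDomain R] (hφ : Function.Surjective φ)
    (hker : RingHom.ker φ = Ideal.span {π}) {s : ℕ} (hn : n = 2 * s + 1) {κ : k} (hκ : κ ≠ 0)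
    {H : k[X]} (hF : (formPoly n c).map φ = C κ * H ^ 2) :
    ∃ (u : R) (G E : R[X]), φ u ≠ 0 ∧ G.natDegree ≤ s ∧ E.natDegree ≤ n ∧
      C u * formPoly n c = G ^ 2 + C π * E ∧ G.map φ = H := by
  have hH : H.natDegree ≤ s := by
    have hdeg : ((formPoly n c).map φ).natDegree ≤ n :=
      natDegree_map_le.trans (formPoly_natDegree_le n c)
    rw [hF, natDegree_C_mul hκ, natDegree_pow] at hdeg
    omega
  obtain ⟨G, rfl, hG⟩ := exists_natDegree_eq_of_mem_lifts (mem_lifts_of_surjective hφ H)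
  obtain ⟨u, hu⟩ := hφ κ⁻¹
  obtain ⟨E, hE, hE_deg⟩ :=
    exists_eq_C_mul_of_map_eq_zero hker (q := C u * formPoly n c - G ^ 2) (by
      rw [Polynomial.map_sub, Polynomial.map_mul, Polynomial.map_pow, map_C, hu, hF, ← mul_assoc,
        ← C_mul, inv_mul_cancel₀ hκ, C_1, one_mul, sub_self])
  refine ⟨u, G, E, hu ▸ inv_ne_zero hκ, hG.trans_le hH, hE_deg.trans ?_,
    sub_eq_iff_eq_add'.1 hE, rfl⟩
  exact (natDegree_sub_le_of_le ((natDegree_C_mul_le _ _).trans (formPoly_natDegree_le n c))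
    (natDegree_pow_le_of_le 2 (hG.trans_le hH))).trans (by omega)

end LocalSquareRoot

section PadicReduction

variable {n : ℕ} {c : ℕ → ℤ} {p : ℕ} [Fact p.Prime]

theorem toZMod_comp_intCast :
    (PadicInt.toZMod (p := p)).comp (Int.castRingHom ℤ_[p]) = Int.castRingHom (ZMod p) :=
  RingHom.ext_int _ _

theorem ker_toZMod_eq_span : RingHom.ker (PadicInt.toZMod (p := p)) = Ideal.span {(p : ℤ_[p])} := by
  rw [PadicInt.ker_toZMod, PadicInt.maximalIdeal_eq_span_p]

theorem isPrimitiveForm_castP (hprim : IsPrimitiveForm n c) : IsPrimitiveForm n (castP p c) :=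
  hprim.comp_ringHom (Int.castRingHom ℤ_[p])

theorem castP_zero_ne_zero (h0 : c 0 ≠ 0) : castP p c 0 ≠ 0 := Int.cast_ne_zero.2 h0

theorem not_natCast_dvd_of_sq_dvd_leadingCoeff (hn : 2 ≤ n) (h0 : c 0 ≠ 0)
    (hprim : IsPrimitiveForm n c) (hmax : IsMaxOrder ℤ_[p] ℚ_[p] n (castP p c))
    (hsq : (p : ℤ) ^ 2 ∣ c 0) : ¬(p : ℤ) ∣ c 1 := by
  have hp : ¬IsUnit (p : ℤ_[p]) := PadicInt.prime_p.not_isUnit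
  intro hdvd
  refine not_dvd_of_sq_dvd_leadingCoeff hn (castP_zero_ne_zero h0) (isPrimitiveForm_castP hprim)
    hmax hp ?_ ?_
  · simpa [castP] using map_dvd (Int.castRingHom ℤ_[p]) hsq
  · simpa [castP] using map_dvd (Int.castRingHom ℤ_[p]) hdvd

theorem isCoprime_map_of_isMaxOrder_castP (h0 : c 0 ≠ 0) (hprim : IsPrimitiveForm n c)
    (hmax : IsMaxOrder ℤ_[p] ℚ_[p] n (castP p c)) {s : ℕ} (hs : 2 * s ≤ n) {u : ℤ} {G E : ℤ[X]}
    (hG : G.natDegree ≤ s) (hE : E.natDegree ≤ n)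
    (hrel : C u * formPoly n c = G ^ 2 + C (p : ℤ) * E)
    (hG0 : G.map (Int.castRingHom (ZMod p)) ≠ 0) :
    IsCoprime (G.map (Int.castRingHom (ZMod p))) (E.map (Int.castRingHom (ZMod p))) := by
  rw [← toZMod_comp_intCast, ← Polynomial.map_map] at hG0 ⊢
  rw [← Polynomial.map_map]
  have hrel_cast := congrArg (Polynomial.map (Int.castRingHom ℤ_[p])) hrel
  simp only [Polynomial.map_mul, Polynomial.map_add, Polynomial.map_pow, map_C, formPoly_map]
    at hrel_cast
  exact isCoprime_map_of_isMaxOrder (castP_zero_ne_zero h0) (isPrimitiveForm_castP hprim) hmax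
    (map_natCast (Int.castRingHom ℤ_[p]) p ▸ PadicInt.prime_p.ne_zero)
    (ZMod.ringHom_surjective _) (by simpa using ker_toZMod_eq_span) hs (natDegree_map_le.trans hG)
    (natDegree_map_le.trans hE) hrel_cast hG0

theorem SquarefulP.exists_formPoly_map_eq (hsq : SquarefulP p n (castP p c)) :
    ∃ κ : ZMod p, κ ≠ 0 ∧ ∃ H : (ZMod p)[X],
      (formPoly n c).map (Int.castRingHom (ZMod p)) = C κ * H ^ 2 := by
  obtain ⟨κ, e, d, H, -, -, -, h⟩ := hsq
  refine ⟨κ, κ.ne_zero, MvPolynomial.aeval ![X, 1] H, ?_⟩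
  have h_eval := congrArg (MvPolynomial.aeval (R := ZMod p) ![(X : (ZMod p)[X]), 1]) h
  simpa [redForm, castP, formPoly, Polynomial.map_sum, Polynomial.algebraMap_eq] using h_eval

theorem exists_mul_self_mul_add_eq_scalarIdeal_natCast {s : ℕ} (hn : n = 2 * s + 1) (hs : 1 ≤ s)
    (h0 : c 0 ≠ 0) (hprim : IsPrimitiveForm n c)
    (hmax : IsMaxOrder ℤ_[p] ℚ_[p] n (castP p c)) (hsq : SquarefulP p n (castP p c))
    (hp : (p : ℤ) ∣ c 0) :
    ∃ Q : Submodule (formRing ℤ ℚ n c) (KF ℤ ℚ n c),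
      Q * Q * (scalarIdeal ℤ ℚ n c p + denomIdeal ℤ ℚ n c) = scalarIdeal ℤ ℚ n c p := by
  have hφ := ZMod.ringHom_surjective (Int.castRingHom (ZMod p))
  have hker := ZMod.ker_intCastRingHom p
  obtain ⟨κ, hκ, H, hF⟩ := hsq.exists_formPoly_map_eq
  obtain ⟨u, G, E, hu, hG, hE, hrel, rfl⟩ :=
    exists_sq_add_eq_of_formPoly_map_eq hφ hker hn hκ hF
  have hG0 : G.map (Int.castRingHom (ZMod p)) ≠ 0 := by
    intro hzero
    exact hprim.formPoly_map_ne_zero (Int.castRingHom (ZMod p)) (by simp [hF, hzero])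
  exact exists_mul_self_mul_add_eq_scalarIdeal hprim hφ hker hn hp
    (not_natCast_dvd_of_sq_dvd_leadingCoeff (by omega) h0 hprim hmax) hu hG hE hrel
    (isCoprime_map_of_isMaxOrder_castP h0 hprim hmax (by omega) hG hE hrel hG0)

theorem isCoprime_of_sq_dvd_leadingCoeff (hn : 2 ≤ n) (h0 : c 0 ≠ 0) (hprim : IsPrimitiveForm n c)
    (hmax : ∀ (p : ℕ) [Fact p.Prime], (p : ℤ) ∣ c 0 → IsMaxOrder ℤ_[p] ℚ_[p] n (castP p c))
    {m : ℤ} (hm : m ^ 2 ∣ c 0) : IsCoprime m (c 1) := by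
  refine isCoprime_of_prime_dvd ?_ fun q hq hqm hq1 => ?_
  · rintro ⟨rfl, -⟩
    exact h0 (by simpa using hm)
  have : Fact q.natAbs.Prime := ⟨Int.prime_iff_natAbs_prime.1 hq⟩
  have hsq : (q.natAbs : ℤ) ^ 2 ∣ c 0 := (pow_dvd_pow_of_dvd (Int.natAbs_dvd.2 hqm) 2).trans hm
  exact not_natCast_dvd_of_sq_dvd_leadingCoeff hn h0 hprim
    (hmax _ ((dvd_pow_self _ two_ne_zero).trans hsq)) hsq (Int.natAbs_dvd.2 hq1)

end PadicReduction

section GlobalSquareRoot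

variable {R K} {n : ℕ} {c : ℕ → R}

local notation "ι" => algebraMap R (KF R K n c)
local notation "𝓞" => formRing R K n c
local notation "𝔞" => denomIdeal R K n c
local notation "⟪" r "⟫" => scalarIdeal R K n c r

theorem exists_mul_self_mul_add_eq_of_squarefree [IsDomain R] [IsPrincipalIdealRing R]
    (hn : 1 ≤ n) {d : R} (hd : Squarefree d) (hdvd : d ∣ c 0)
    (hprime : ∀ π, Prime π → π ∣ d → ∃ Q : Submodule 𝓞 (KF R K n c), Q * Q * (⟪π⟫ + 𝔞) = ⟪π⟫) :
    ∃ Q : Submodule 𝓞 (KF R K n c), Q * Q * (⟪d⟫ + 𝔞) = ⟪d⟫ := by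
  induction d using UniqueFactorizationMonoid.induction_on_prime with
  | h₁ => exact absurd hd not_squarefree_zero
  | h₂ d hunit =>
    exact ⟨1, by rw [scalarIdeal_eq_one hunit, add_eq_left_iff_le.2 denomIdeal_le_one]; simp⟩
  | h₃ d π _ hπ ih =>
    obtain ⟨hrel, -, hd'⟩ := squarefree_mul_iff.1 hd
    obtain ⟨P, hP⟩ := hprime π hπ (dvd_mul_right π d)
    obtain ⟨Q, hQ⟩ := ih hd' ((dvd_mul_left d π).trans hdvd)
      fun ρ hρ hρd => hprime ρ hρ (hρd.mul_left π)
    have hone : ⟪π⟫ + ⟪d⟫ + ⟪c 1⟫ = 1 := by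
      rw [scalarIdeal_add_eq_one hrel.isCoprime, add_eq_left_iff_le.2 (scalarIdeal_le_one _)]
    refine ⟨P * Q, ?_⟩
    calc P * Q * (P * Q) * (⟪π * d⟫ + 𝔞)
        = P * P * (⟪π⟫ + 𝔞) * (Q * Q * (⟪d⟫ + 𝔞)) := by
          rw [← scalarIdeal_add_denomIdeal_mul hn hdvd hone]; ring
      _ = ⟪π * d⟫ := by rw [hP, hQ, scalarIdeal_mul]

theorem exists_isUnit_mul_self_eq (hprim : IsPrimitiveForm n c) {r : ℕ} (hn : n = 2 * r + 3)
    {k m : R} (hc0 : c 0 = k * m ^ 2) (hm : IsCoprime m (c 1)) (hk : IsUnit (ι k))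
    {Q : Submodule 𝓞 (KF R K n c)} (hQ : Q * Q * (⟪k⟫ + 𝔞) = ⟪k⟫) :
    ∃ J : Submodule 𝓞 (KF R K n c),
      IsUnit J ∧ J * J = ⟪k⟫ * formIdeal R K n c ^ (n - 2) := by
  have hcop {a b : R} (hb : IsCoprime b (c 1)) : ⟪a⟫ + ⟪b⟫ + ⟪c 1⟫ = 1 := by
    rw [add_assoc, scalarIdeal_add_eq_one hb, add_eq_right_iff_le.2 (scalarIdeal_le_one a)]
  have hmm : (⟪m⟫ + 𝔞) * (⟪m⟫ + 𝔞) = ⟪m ^ 2⟫ + 𝔞 := by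
    rw [sq]
    exact scalarIdeal_add_denomIdeal_mul (by omega) ⟨k, by rw [hc0]; ring⟩ (hcop hm)
  have hkm : (⟪k⟫ + 𝔞) * (⟪m ^ 2⟫ + 𝔞) = 𝔞 := by
    rw [scalarIdeal_add_denomIdeal_mul (by omega) hc0.symm.dvd (hcop hm.pow_left), ← hc0]
    exact add_eq_right_iff_le.2 scalarIdeal_leadingCoeff_le_denomIdeal
  have h𝔞 := denomIdeal_mul_formIdeal (K := K) hprim
  set I := formIdeal R K n c
  set J := I ^ (r + 1) * Q * (⟪k⟫ + 𝔞) * (⟪m⟫ + 𝔞) with hJ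
  have hJJ : J * J = ⟪k⟫ * I ^ (n - 2) := by
    calc J * J = I ^ (2 * r + 1) * (Q * Q * (⟪k⟫ + 𝔞)) *
          ((⟪k⟫ + 𝔞) * ((⟪m⟫ + 𝔞) * (⟪m⟫ + 𝔞)) * I) := by rw [hJ]; ring
      _ = ⟪k⟫ * I ^ (n - 2) := by
        rw [hQ, hmm, hkm, h𝔞, mul_one, mul_comm, show n - 2 = 2 * r + 1 by omega]
  have hI : IsUnit I := IsUnit.of_mul_eq_one _ ((mul_comm _ _).trans h𝔞)
  exact ⟨J, isUnit_of_mul_isUnit_left (hJJ ▸ (isUnit_scalarIdeal hk).mul (hI.pow _)), hJJ⟩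

end GlobalSquareRoot

theorem inverse_different_is_square_general {n : ℕ} (hn : 3 ≤ n) (hodd : Odd n) {c : ℕ → ℤ}
    (h0 : c 0 ≠ 0) {k : ℤ} (hksqfree : Squarefree k) (hkpart : ∃ m : ℤ, c 0 = k * m ^ 2)
    (hprim : IsPrimitiveForm n c)
    (hmax : ∀ (p : ℕ) [Fact p.Prime], (p : ℤ) ∣ c 0 → IsMaxOrder ℤ_[p] ℚ_[p] n (castP p c))
    (hsq : ∀ (p : ℕ) [Fact p.Prime], (p : ℤ) ∣ k → SquarefulP p n (castP p c)) :
    ∃ J : Submodule ℤ (KF ℤ ℚ n c), IsInvIdeal ℤ ℚ n c J ∧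
      ∃ α : KF ℤ ℚ n c, IsUnit α ∧
        J * J = Submodule.span ℤ {α} * IFmod ℤ ℚ n c (n - 2) := by
  obtain ⟨s, hs⟩ := hodd
  obtain ⟨m, hm⟩ := hkpart
  have hkc : k ∣ c 0 := ⟨m ^ 2, hm⟩
  have hprime (π : ℤ) (hπ : Prime π) (hπk : π ∣ k) :
      ∃ Q : Submodule (formRing ℤ ℚ n c) (KF ℤ ℚ n c),
        Q * Q * (scalarIdeal ℤ ℚ n c π + denomIdeal ℤ ℚ n c) = scalarIdeal ℤ ℚ n c π := by
    have : Fact π.natAbs.Prime := ⟨Int.prime_iff_natAbs_prime.1 hπ⟩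
    have hpk : (π.natAbs : ℤ) ∣ k := Int.natAbs_dvd.2 hπk
    rw [← scalarIdeal_eq_of_associated (Int.associated_natAbs π).symm]
    exact exists_mul_self_mul_add_eq_scalarIdeal_natCast hs (by omega) h0 hprim
      (hmax _ (hpk.trans hkc)) (hsq _ hpk) (hpk.trans hkc)
  obtain ⟨Q, hQ⟩ := exists_mul_self_mul_add_eq_of_squarefree (by omega) hksqfree hkc hprime
  have hmc : IsCoprime m (c 1) :=
    isCoprime_of_sq_dvd_leadingCoeff (by omega) h0 hprim hmax ⟨k, hm.trans (mul_comm _ _)⟩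
  have hk : IsUnit (algebraMap ℤ (KF ℤ ℚ n c) k) := isUnit_algebraMap_KF hksqfree.ne_zero
  obtain ⟨J, hJ, hJJ⟩ := exists_isUnit_mul_self_eq hprim (r := s - 1) (by omega) hm hmc hk hQ
  refine ⟨J.restrictScalars ℤ, isInvIdeal_restrictScalars hJ, _, hk, ?_⟩
  rw [← Submodule.restrictScalars_mul, hJJ, mul_comm, scalarIdeal, restrictScalars_mul_span,
    restrictScalars_formIdeal_pow, mul_comm]

/-- Theorem 1.4: if `F` is primitive of odd degree `n` with odd leading
coefficient `f0`, `R_F ⊗ ℤ_p` is maximal for every `p ∣ f0`, and `F` is squareful over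
`ℤ_p` for every `p ∣ k`, then the class of `I_F^{n-2}` (the class of the inverse different)
is a square in `Cl(R_F)`. -/
theorem inverse_different_is_square
    (n : ℕ) (hn : 3 ≤ n) (hodd : Odd n)
    (f0 : ℤ) (hf0 : f0 ≠ 0) (hf0odd : Odd f0)
    (k : ℤ) (hksqfree : Squarefree k) (hkpart : ∃ m : ℤ, f0 = k * m ^ 2)
    (r1 r2 : ℕ) (hsig : r1 + 2 * r2 = n)
    (f : Fin (n + 1) → ℤ) (hlead : f 0 = f0)
    (hsep : SepSig n r1 f) (hprim : PrimZ n f)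
    (hmax : ∀ (p : ℕ) [Fact p.Prime], (p : ℤ) ∣ f0 →
      IsMaxOrder ℤ_[p] ℚ_[p] n (castP p (fpad n f)))
    (hsq : ∀ (p : ℕ) [Fact p.Prime], (p : ℤ) ∣ k → SquarefulP p n (castP p (fpad n f))) :
    ∃ J : Submodule ℤ (KF ℤ ℚ n (fpad n f)), IsInvIdeal ℤ ℚ n (fpad n f) J ∧
      ∃ α : KF ℤ ℚ n (fpad n f), IsUnit α ∧
        J * J = Submodule.span ℤ {α} * IFmod ℤ ℚ n (fpad n f) (n - 2) := by
  subst hlead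
  exact inverse_different_is_square_general hn hodd hf0 hksqfree hkpart hprim.isPrimitiveForm
    hmax hsq

end BHS
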